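/- arXiv:1804.08810 — 3 statements merged into one kernel-verified Lean document; each statement's English description precedes it below -/
import Mathlib

section
/- There exist constants c1, c2 > 0 such that for all sufficiently large even N the following holds. Let g ∈ G[X] be the Raz–Yehudayoff polynomial on X = {x_1,…,x_N}. Suppose g = f_1 + ⋯ + f_m where, for each i, f_i is computed by an ROABP of width s_i ≥ 2 over G with some variable order π_i, and let s = max{s_1,…,s_m}. Then m ≥ 2^{c1·N^{1/5}} / s^{c2·log N}. -/
open MvPolynomial

noncomputable section

/-- A multilinear polynomial: every exponent is at most 1. -/
def MLin {σ : Type*} {K : Type*} [CommSemiring K] (f : MvPolynomial σ K) : Prop :=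
  ∀ d ∈ f.support, ∀ i, d i ≤ 1

/-- The partial derivative matrix of a multilinear polynomial over Y ∪ Z
(Y = `inl`-variables, Z = `inr`-variables), rows and columns indexed by subsets. -/
def pdm {h : ℕ} {K : Type*} [CommSemiring K] (f : MvPolynomial (Fin h ⊕ Fin h) K) :
    Matrix (Finset (Fin h)) (Finset (Fin h)) K := fun S T =>
  f.coeff ((∑ i ∈ S, Finsupp.single (Sum.inl i) 1) + ∑ j ∈ T, Finsupp.single (Sum.inr j) 1)

/-- The field G = F(W), the field of rational functions over F in variables
`w_{i,k,j}`, `i,k,j ∈ ℕ`. -/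
abbrev Gf (F : Type*) [Field F] : Type _ := FractionRing (MvPolynomial (ℕ × ℕ × ℕ) F)

/-- The element w_{i,k,j} of G. -/
def wv (F : Type*) [Field F] (i k j : ℕ) : Gf F :=
  algebraMap (MvPolynomial (ℕ × ℕ × ℕ) F) (Gf F) (MvPolynomial.X (i, k, j))

/-- The Raz–Yehudayoff polynomials `g_{i,j}` (first argument is fuel; every
recursive call reduces `j - i` by at least 2, so fuel `N` suffices for `g_{1,N}`). -/
def RY (F : Type*) [Field F] : ℕ → ℕ → ℕ → MvPolynomial ℕ (Gf F)
  | 0, _, _ => 1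
  | fuel + 1, i, j =>
      if j < i then 1
      else (1 + X i * X j) * RY F fuel (i + 1) (j - 1)
        + ∑ k ∈ (Finset.Icc (i + 1) (j - 2)).filter (fun k => (k - i) % 2 = 1),
            C (wv F i k j) * RY F fuel i k * RY F fuel (k + 1) j

/-- The Raz–Yehudayoff polynomial `g = g_{1,N}`, in the variables `x_1, …, x_N`. -/
def razPoly (F : Type*) [Field F] (N : ℕ) : MvPolynomial ℕ (Gf F) := RY F N 1 N

/-- `|φ(S) ∩ Y|` for a partition function φ. -/
def yCount {h : ℕ} (φ : ℕ → Fin h ⊕ Fin h) (S : Finset ℕ) : ℕ :=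
  (S.filter fun x => (φ x).isLeft = true).card

/-- `|φ(S) ∩ Z|` for a partition function φ. -/
def zCount {h : ℕ} (φ : ℕ → Fin h ⊕ Fin h) (S : Finset ℕ) : ℕ :=
  (S.filter fun x => (φ x).isRight = true).card

/-- `S` is `k`-unbalanced with respect to the partition φ. -/
def kUnb {h : ℕ} (φ : ℕ → Fin h ⊕ Fin h) (k : ℕ) (S : Finset ℕ) : Prop :=
  (k : ℤ) ≤ |(yCount φ S : ℤ) - (zCount φ S : ℤ)|

/-- Extension of a partition given on `X` to all of ℕ (junk value elsewhere). -/
def extPart {h : ℕ} (hh : 0 < h) (X : Finset ℕ) (e : {x // x ∈ X} → Fin h ⊕ Fin h) :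
    ℕ → Fin h ⊕ Fin h := fun x =>
  if hx : x ∈ X then e ⟨x, hx⟩ else Sum.inl ⟨0, hh⟩

/-- Probability of an event under the uniform distribution on a finite type. -/
def unifProb {Ω : Type*} [Fintype Ω] (p : Ω → Prop) : ℝ :=
  haveI := Classical.decPred p
  ((Finset.univ.filter p).card : ℝ) / (Fintype.card Ω : ℝ)

/-- The (1,1) entry of the product `M 0 * M 1 * ⋯ * M (n-1)`. -/
def mprodVal {K : Type*} [CommSemiring K] {n w : ℕ} (hw : 0 < w)
    (M : Fin n → Matrix (Fin w) (Fin w) (MvPolynomial ℕ K)) : MvPolynomial ℕ K :=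
  (List.ofFn M).prod ⟨0, hw⟩ ⟨0, hw⟩

/-- An oblivious read-once ABP of width `w` in variables `x_1, …, x_N` with
variable order π (a permutation of `{1, …, N}`): the ℓ-th layer matrix has
entries of degree at most 1 in the single variable `x_{π(ℓ)}`. -/
def IsROABP {K : Type*} [CommSemiring K] (N w : ℕ) (π : ℕ → ℕ)
    (M : Fin N → Matrix (Fin w) (Fin w) (MvPolynomial ℕ K)) : Prop :=
  Set.BijOn π (Set.Icc 1 N) (Set.Icc 1 N) ∧
    ∀ ℓ : Fin N, ∀ i j, ∃ a b : K, M ℓ i j = C a + C b * X (π (ℓ.val + 1))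

/-- An `r`-pass syntactically multilinear ABP of width `w`. -/
def IsRPass {K : Type*} [CommSemiring K] (N w r : ℕ) (π : Fin r → ℕ → ℕ)
    (M : Fin (r * N) → Matrix (Fin w) (Fin w) (MvPolynomial ℕ K)) : Prop :=
  (∀ j, Set.BijOn (π j) (Set.Icc 1 N) (Set.Icc 1 N)) ∧
  (∀ ℓ : Fin (r * N), ∀ i j, ∃ a b : K,
      M ℓ i j = C a + C b *
        X (π ⟨ℓ.val / N, Nat.div_lt_of_lt_mul (by rw [Nat.mul_comm N r]; exact ℓ.2)⟩
            (ℓ.val % N + 1))) ∧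
  (∀ (idx : Fin (r * N + 1) → Fin w) (v : ℕ) (ℓ₁ ℓ₂ : Fin (r * N)),
      v ∈ (M ℓ₁ (idx ℓ₁.castSucc) (idx ℓ₁.succ)).vars →
      v ∈ (M ℓ₂ (idx ℓ₂.castSucc) (idx ℓ₂.succ)).vars → ℓ₁ = ℓ₂)

/-- An α-sparse ROABP with variable blocks `Xs 0, …, Xs (d-1)`, width `w` and
sparsity `t`: every entry of the `i`-th matrix is a multilinear polynomial in the
variables `Xs i` with at most `t` monomials. -/
def IsSparseROABP {K : Type*} [CommSemiring K] {d : ℕ} (w t : ℕ)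
    (Xs : Fin d → Finset ℕ) (M : Fin d → Matrix (Fin w) (Fin w) (MvPolynomial ℕ K)) : Prop :=
  ∀ ℓ i j, MLin (M ℓ i j) ∧ (M ℓ i j).vars ⊆ Xs ℓ ∧ (M ℓ i j).support.card ≤ t

def RYg {R : Type*} [CommRing R] (w : ℕ → ℕ → ℕ → R) : ℕ → ℕ → ℕ → MvPolynomial ℕ R
  | 0, _, _ => 1
  | fuel + 1, i, j =>
      if j < i then 1
      else (1 + X i * X j) * RYg w fuel (i + 1) (j - 1)
        + ∑ k ∈ (Finset.Icc (i + 1) (j - 2)).filter (fun k => (k - i) % 2 = 1),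
            C (w i k j) * RYg w fuel i k * RYg w fuel (k + 1) j

theorem RYg_map {R R' : Type*} [CommRing R] [CommRing R'] (φ : R →+* R') (w : ℕ → ℕ → ℕ → R)
    (f i j : ℕ) :
    MvPolynomial.map φ (RYg w f i j) = RYg (fun a b c => φ (w a b c)) f i j := by
  induction f generalizing i j with
  | zero => simp [RYg]
  | succ f ih =>
    unfold RYg
    split_ifs
    · simp
    · simp [ih]

def ind (T : Finset ℕ) : ℕ →₀ ℕ := Finsupp.indicator T (fun _ _ => 1)

theorem ind_apply (T : Finset ℕ) (i : ℕ) : ind T i = if i ∈ T then 1 else 0 := by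
  simp [ind, Finsupp.indicator_apply]

def cf {R : Type*} [CommRing R] (P : MvPolynomial ℕ R) (T : Finset ℕ) : R := coeff (ind T) P

theorem cf_map {R R' : Type*} [CommRing R] [CommRing R'] (φ : R →+* R') (P : MvPolynomial ℕ R)
    (T : Finset ℕ) : cf (MvPolynomial.map φ P) T = φ (cf P T) := by
  simp [cf, coeff_map]

theorem coeff_zero_of_supported {R : Type*} [CommRing R] {P : MvPolynomial ℕ R} {U : Finset ℕ}
    (hP : P ∈ supported R (U : Set ℕ)) {d : ℕ →₀ ℕ} (hd : coeff d P ≠ 0) {i : ℕ} (hi : i ∉ U) :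
    d i = 0 := by
  by_contra h
  apply hi
  have h1 := mem_supported.1 hP
  have : i ∈ P.vars := (mem_vars_iff_mem_support i).2 ⟨d, mem_support_iff.2 hd, Finsupp.mem_support_iff.2 h⟩
  exact_mod_cast h1 this

theorem cf_mul {R : Type*} [CommRing R] {P Q : MvPolynomial ℕ R} {U V T : Finset ℕ}
    (hP : P ∈ supported R (U : Set ℕ)) (hQ : Q ∈ supported R (V : Set ℕ)) (hUV : Disjoint U V)
    (hT : T ⊆ U ∪ V) : cf (P * Q) T = cf P (T ∩ U) * cf Q (T ∩ V) := by
  unfold cf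
  rw [coeff_mul]
  rw [Finset.sum_eq_single (ind (T ∩ U), ind (T ∩ V))]
  · rintro ⟨d1, d2⟩ hd hne
    by_contra hz
    apply hne
    have h1 : coeff d1 P ≠ 0 := fun h => hz (by simp [h])
    have h2 : coeff d2 Q ≠ 0 := fun h => hz (by simp [h])
    have hd := Finset.HasAntidiagonal.mem_antidiagonal.1 hd
    simp only at hd
    have key : ∀ i, d1 i + d2 i = if i ∈ T then 1 else 0 := by
      intro i; rw [← ind_apply, ← hd]; rfl
    have hdis := Finset.disjoint_left.1 hUV
    ext i
    · have := key i
      simp only [ind_apply, Finset.mem_inter]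
      by_cases hi : i ∈ U
      · have h3 := coeff_zero_of_supported hQ h2 (hdis hi)
        simp only [hi, and_true]; omega
      · have h3 := coeff_zero_of_supported hP h1 hi
        simp [hi, h3]
    · have := key i
      simp only [ind_apply, Finset.mem_inter]
      by_cases hi : i ∈ V
      · have h3 := coeff_zero_of_supported hP h1 (fun h => hdis h hi)
        simp only [hi, and_true]; omega
      · have h3 := coeff_zero_of_supported hQ h2 hi
        simp [hi, h3]
  · intro h
    exfalso
    apply h
    rw [Finset.HasAntidiagonal.mem_antidiagonal]
    ext i
    have hdis : i ∈ U → i ∉ V := fun ha => Finset.disjoint_left.1 hUV ha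
    have hT' := @hT i
    simp only [Finset.mem_union] at hT'
    simp only [Finsupp.add_apply, ind_apply, Finset.mem_inter]
    by_cases h1 : i ∈ T <;> by_cases h2 : i ∈ U <;> by_cases h3 : i ∈ V <;> simp_all

def ND {K : Type*} [CommRing K] (S Z : Finset ℕ) (c : Finset ℕ → K) : Prop :=
  ∀ v : Finset ℕ → K, (∀ B ⊆ Z, ∑ A ∈ S.powerset, v A * c (A ∪ B) = 0) → ∀ A ⊆ S, v A = 0

theorem sum_powerset_union {K : Type*} [AddCommMonoid K] {S T : Finset ℕ} (h : Disjoint S T)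
    (f : Finset ℕ → K) :
    ∑ A ∈ (S ∪ T).powerset, f A = ∑ A ∈ S.powerset, ∑ B ∈ T.powerset, f (A ∪ B) := by
  rw [← Finset.sum_product']
  have hdis : ∀ a, a ∈ S → a ∉ T := fun a ha => Finset.disjoint_left.1 h ha
  refine Finset.sum_bij' (fun A _ => (A ∩ S, A ∩ T)) (fun p _ => p.1 ∪ p.2) ?_ ?_ ?_ ?_ ?_
  · intro A _
    simp [Finset.inter_subset_right]
  · rintro ⟨A, B⟩ hp
    simp only [Finset.mem_product, Finset.mem_powerset] at hp ⊢
    exact Finset.union_subset_union hp.1 hp.2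
  · intro A hA
    simp only [Finset.mem_powerset] at hA
    simp only
    rw [← Finset.inter_union_distrib_left]
    exact Finset.inter_eq_left.2 hA
  · rintro ⟨A, B⟩ hp
    simp only [Finset.mem_product, Finset.mem_powerset] at hp
    ext a <;> simp only [Finset.mem_inter, Finset.mem_union] <;>
      have h1 := @hp.1 a <;> have h2 := @hp.2 a <;> have h3 := hdis a <;> tauto
  · intro A hA
    simp only [Finset.mem_powerset] at hA
    simp only
    rw [← Finset.inter_union_distrib_left, Finset.inter_eq_left.2 hA]

theorem ND_mul {K : Type*} [CommRing K] {P Q : MvPolynomial ℕ K} {U V S1 Z1 S2 Z2 : Finset ℕ}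
    (hP : P ∈ supported K (U : Set ℕ)) (hQ : Q ∈ supported K (V : Set ℕ)) (hUV : Disjoint U V)
    (hS1 : S1 ⊆ U) (hZ1 : Z1 ⊆ U) (hS2 : S2 ⊆ V) (hZ2 : Z2 ⊆ V)
    (h1 : ND S1 Z1 (cf P)) (h2 : ND S2 Z2 (cf Q)) : ND (S1 ∪ S2) (Z1 ∪ Z2) (cf (P * Q)) := by
  intro v hv
  have hdis : ∀ a, a ∈ U → a ∉ V := fun a ha => Finset.disjoint_left.1 hUV ha
  have key : ∀ A1 ⊆ S1, ∀ A2 ⊆ S2, v (A1 ∪ A2) = 0 := by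
    intro A1 hA1
    refine h2 (fun A2 => v (A1 ∪ A2)) ?_
    intro B2 hB2
    refine h1 (fun A1 => ∑ A2 ∈ S2.powerset, v (A1 ∪ A2) * cf Q (A2 ∪ B2)) ?_ A1 hA1
    intro B1 hB1
    have := hv (B1 ∪ B2) (Finset.union_subset_union hB1 hB2)
    rw [sum_powerset_union (Finset.disjoint_of_subset_left hS1 (Finset.disjoint_of_subset_right hS2 hUV))] at this
    rw [← this]
    refine Finset.sum_congr rfl fun A hA => ?_
    rw [Finset.sum_mul]
    refine Finset.sum_congr rfl fun B hB => ?_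
    rw [Finset.mem_powerset] at hA hB
    replace hA := hA.trans hS1
    replace hB := hB.trans hS2
    have hB1U := hB1.trans hZ1
    have hB2V := hB2.trans hZ2
    have e1 : (A ∪ B ∪ (B1 ∪ B2)) ∩ U = A ∪ B1 := by
      ext a
      have := hdis a; have := @hA a; have := @hB a; have := @hB1U a; have := @hB2V a
      simp only [Finset.mem_inter, Finset.mem_union]; tauto
    have e2 : (A ∪ B ∪ (B1 ∪ B2)) ∩ V = B ∪ B2 := by
      ext a
      have := hdis a; have := @hA a; have := @hB a; have := @hB1U a; have := @hB2V a
      simp only [Finset.mem_inter, Finset.mem_union]; tauto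
    have e3 : A ∪ B ∪ (B1 ∪ B2) ⊆ U ∪ V := by
      intro a
      have := @hA a; have := @hB a; have := @hB1U a; have := @hB2V a
      simp only [Finset.mem_union]; tauto
    rw [cf_mul hP hQ hUV e3, e1, e2]
    ring
  intro A hA
  have : A = (A ∩ S1) ∪ (A ∩ S2) := by
    rw [← Finset.inter_union_distrib_left]
    exact (Finset.inter_eq_left.2 hA).symm
  rw [this]
  exact key _ Finset.inter_subset_right _ Finset.inter_subset_right

def dmat {K : Type*} [CommRing K] {S Z : Finset ℕ} (e : S.powerset ≃ Z.powerset)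
    (c : Finset ℕ → K) : Matrix S.powerset S.powerset K := fun A A' => c (A.1 ∪ (e A').1)

theorem ND_iff_det {K : Type*} [Field K] {S Z : Finset ℕ} (e : S.powerset ≃ Z.powerset)
    (c : Finset ℕ → K) : ND S Z c ↔ (dmat e c).det ≠ 0 := by
  rw [Ne, ← Matrix.exists_vecMul_eq_zero_iff]
  constructor
  · rintro h ⟨v, hv, hM⟩
    apply hv
    have := h (fun A => if hA : A ∈ S.powerset then v ⟨A, hA⟩ else 0) ?_
    · ext ⟨A, hA⟩
      have := this A (Finset.mem_powerset.1 hA)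
      simpa [Finset.mem_powerset.1 hA] using this
    · intro B hB
      have := congrFun hM (e.symm ⟨B, Finset.mem_powerset.2 hB⟩)
      simp only [Matrix.vecMul, dotProduct, dmat, Equiv.apply_symm_apply, Pi.zero_apply] at this
      rw [← this, ← Finset.sum_coe_sort]
      refine Finset.sum_congr rfl fun A _ => ?_
      simp
  · intro h v hv A hA
    by_contra hne
    apply h
    refine ⟨fun A => v A.1, fun h0 => hne (congrFun h0 ⟨A, Finset.mem_powerset.2 hA⟩), ?_⟩
    ext A'
    simp only [Matrix.vecMul, dotProduct, dmat, Pi.zero_apply]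
    rw [← hv (e A').1 (Finset.mem_powerset.1 (e A').2)]
    exact Finset.sum_coe_sort S.powerset (fun A => v A * c (A ∪ (e A').1))

theorem exists_equiv {S Z : Finset ℕ} (h : S.card = Z.card) : Nonempty (S.powerset ≃ Z.powerset) :=
  ⟨Fintype.equivOfCardEq (by simp [h])⟩

theorem ND_generic {K : Type*} [Field K] [Infinite K] {S Z : Finset ℕ} (h : S.card = Z.card)
    (cA cB : Finset ℕ → K) (hB : ND S Z cB) : ∃ x : K, ND S Z (fun T => cA T + x * cB T) := by
  obtain ⟨e⟩ := exists_equiv h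
  rw [ND_iff_det e] at hB
  set p : Polynomial K := Matrix.det ((Polynomial.X : Polynomial K) • (dmat e cB).map Polynomial.C + (dmat e cA).map Polynomial.C) with hp
  have hp0 : p ≠ 0 := by
    intro h0
    have := Polynomial.coeff_det_X_add_C_card (dmat e cB) (dmat e cA)
    rw [← hp, h0] at this
    exact hB (by simpa using this.symm)
  have : ∃ x, p.eval x ≠ 0 := by
    by_contra hc
    push Not at hc
    exact hp0 (Polynomial.funext (fun x => by simp [hc x]))
  obtain ⟨x, hx⟩ := this
  refine ⟨x, (ND_iff_det e _).2 ?_⟩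
  convert hx using 1
  rw [hp, ← Polynomial.coe_evalRingHom, RingHom.map_det]
  congr 1
  ext A B
  simp only [dmat, RingHom.mapMatrix_apply, Matrix.map_apply, Matrix.add_apply, Matrix.smul_apply, smul_eq_mul,
    Polynomial.coe_evalRingHom, Polynomial.eval_add, Polynomial.eval_mul, Polynomial.eval_X, Polynomial.eval_C]
  ring

theorem ND_descend {R K E : Type*} [CommRing R] [Field K] [Field E] (φ : R →+* E) (ψ : R →+* K)
    (hψ : Function.Injective ψ) {S Z : Finset ℕ} (h : S.card = Z.card) (c : Finset ℕ → R)
    (hE : ND S Z (fun T => φ (c T))) : ND S Z (fun T => ψ (c T)) := by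
  obtain ⟨e⟩ := exists_equiv h
  rw [ND_iff_det e] at hE ⊢
  have e1 : (dmat e (fun T => φ (c T))).det = φ (dmat e c).det := by
    rw [RingHom.map_det]; rfl
  have e2 : (dmat e (fun T => ψ (c T))).det = ψ (dmat e c).det := by
    rw [RingHom.map_det]; rfl
  rw [e1] at hE
  rw [e2]
  intro h0
  apply hE
  rw [(map_eq_zero_iff ψ hψ).1 h0, map_zero]

theorem RYg_supported {R : Type*} [CommRing R] (w : ℕ → ℕ → ℕ → R) (f i j : ℕ) :
    RYg w f i j ∈ supported R ((Finset.Icc i j : Finset ℕ) : Set ℕ) := by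
  induction f generalizing i j with
  | zero => exact one_mem _
  | succ f ih =>
    unfold RYg
    split_ifs with hij
    · exact one_mem _
    · have hX : ∀ a, a ∈ Finset.Icc i j → (X a : MvPolynomial ℕ R) ∈ supported R ((Finset.Icc i j : Finset ℕ) : Set ℕ) := by
        intro a ha
        exact Algebra.subset_adjoin ⟨a, ha, rfl⟩
      refine add_mem (mul_mem (add_mem (one_mem _) (mul_mem (hX _ ?_) (hX _ ?_))) ?_) (sum_mem ?_)
      · simp; omega
      · simp; omega
      · refine supported_mono ?_ (ih _ _)
        intro a; simp; omega
      · intro k hk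
        simp at hk
        refine mul_mem (mul_mem (Subalgebra.algebraMap_mem _ _) ?_) ?_
        · refine supported_mono ?_ (ih _ _)
          intro a; simp; omega
        · refine supported_mono ?_ (ih _ _)
          intro a; simp; omega

theorem RYg_congr {R : Type*} [CommRing R] (w w' : ℕ → ℕ → ℕ → R) (f f' i j : ℕ)
    (hf : j + 1 ≤ i + f) (hf' : j + 1 ≤ i + f')
    (h : ∀ a b c, i ≤ a → a ≤ c → c ≤ j → w a b c = w' a b c) :
    RYg w f i j = RYg w' f' i j := by
  induction f generalizing i j f' with
  | zero =>
    cases f' with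
    | zero => rfl
    | succ f' => unfold RYg; rw [if_pos (by omega)]
  | succ f ih =>
    cases f' with
    | zero => unfold RYg; rw [if_pos (by omega)]
    | succ f' =>
      unfold RYg
      split_ifs with hij
      · rfl
      · congr 1
        · rw [ih f' (i+1) (j-1) (by omega) (by omega)]
          intro a b c h1 h2 h3
          exact h a b c (by omega) h2 (by omega)
        · refine Finset.sum_congr rfl fun k hk => ?_
          simp at hk
          rw [ih f' i k (by omega) (by omega), ih f' (k+1) j (by omega) (by omega), h i k j le_rfl (by omega) le_rfl]
          · intro a b c h1 h2 h3
            exact h a b c (by omega) h2 (by omega)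
          · intro a b c h1 h2 h3
            exact h a b c (by omega) h2 (by omega)

theorem card_Icc_succ (S : Finset ℕ) (i n : ℕ) :
    (Finset.Icc i (i + (n + 1)) ∩ S).card
      = (Finset.Icc i (i + n) ∩ S).card + if i + (n + 1) ∈ S then 1 else 0 := by
  have : Finset.Icc i (i + (n + 1)) = insert (i + (n + 1)) (Finset.Icc i (i + n)) := by
    ext a; simp; omega
  rw [this]
  split_ifs with h
  · rw [Finset.insert_inter_of_mem h, Finset.card_insert_of_notMem]
    simp
  · rw [Finset.insert_inter_of_notMem h]; simp

theorem exists_split (S : Finset ℕ) (i j : ℕ) (hij : i + 1 ≤ j)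
    (hb : 2 * (Finset.Icc i j ∩ S).card = j + 1 - i) (hs : i ∈ S ↔ j ∈ S) :
    ∃ k, i + 1 ≤ k ∧ k + 2 ≤ j ∧ (k - i) % 2 = 1 ∧ 2 * (Finset.Icc i k ∩ S).card = k + 1 - i := by
  obtain ⟨n, rfl⟩ : ∃ n, j = i + (n + 1) := ⟨j - i - 1, by omega⟩
  set a : ℕ → ℕ := fun n => (Finset.Icc i (i + n) ∩ S).card with ha
  have hsucc : ∀ n, a (n + 1) = a n + if i + (n + 1) ∈ S then 1 else 0 := card_Icc_succ S i
  have hb' : 2 * a (n + 1) = n + 2 := by simp only [ha]; omega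
  have hn := hsucc n
  suffices h : ∃ l, 1 ≤ l ∧ l < n ∧ 2 * a l = l + 1 by
    obtain ⟨l, h1, h2, h3⟩ := h
    refine ⟨i + l, by omega, by omega, by omega, ?_⟩
    simp only [ha] at h3; omega
  by_cases hi : i ∈ S
  · have h0 : a 0 = 1 := by
      simp [ha, hi]
    rw [if_pos (hs.1 hi)] at hn
    have hex : ∃ l, 2 * a l ≤ l + 1 := ⟨n, by omega⟩
    classical
    have hsp := Nat.find_spec hex
    have hle : Nat.find hex ≤ n := Nat.find_min' hex (by omega)
    have hmin := fun m => @Nat.find_min _ _ hex m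
    generalize Nat.find hex = l at *
    have hl0 : l ≠ 0 := by rintro rfl; omega
    obtain ⟨l, rfl⟩ := Nat.exists_eq_succ_of_ne_zero hl0
    have h1 := hmin l (by omega)
    have h2 := hsucc l
    have h3 : 2 * a (l + 1) = l + 1 + 1 := by simp only [Nat.succ_eq_add_one] at *; omega
    refine ⟨l + 1, by omega, ?_, h3⟩
    rcases Nat.lt_or_ge (l + 1) n with h | h
    · exact h
    · have : l + 1 = n := by simp only [Nat.succ_eq_add_one] at *; omega
      rw [this] at h3; omega
  · have h0 : a 0 = 0 := by
      simp [ha, hi]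
    rw [if_neg (fun h => hi (hs.2 h))] at hn
    have hex : ∃ l, l + 1 ≤ 2 * a l := ⟨n, by omega⟩
    classical
    have hsp := Nat.find_spec hex
    have hle : Nat.find hex ≤ n := Nat.find_min' hex (by omega)
    have hmin := fun m => @Nat.find_min _ _ hex m
    generalize Nat.find hex = l at *
    have hl0 : l ≠ 0 := by rintro rfl; omega
    obtain ⟨l, rfl⟩ := Nat.exists_eq_succ_of_ne_zero hl0
    have h1 := hmin l (by omega)
    have h2 := hsucc l
    have h3 : 2 * a (l + 1) = l + 1 + 1 := by
      simp only [Nat.succ_eq_add_one] at *; split_ifs at h2 <;> omega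
    refine ⟨l + 1, by omega, ?_, h3⟩
    rcases Nat.lt_or_ge (l + 1) n with h | h
    · exact h
    · have : l + 1 = n := by simp only [Nat.succ_eq_add_one] at *; omega
      rw [this] at h3; omega

theorem cf_add {R : Type*} [CommRing R] (P Q : MvPolynomial ℕ R) (T : Finset ℕ) :
    cf (P + Q) T = cf P T + cf Q T := by simp [cf]

theorem cf_C_mul {R : Type*} [CommRing R] (x : R) (Q : MvPolynomial ℕ R) (T : Finset ℕ) :
    cf (C x * Q) T = x * cf Q T := by simp [cf]

theorem cf_one {R : Type*} [CommRing R] (T : Finset ℕ) :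
    cf (1 : MvPolynomial ℕ R) T = if T = ∅ then 1 else 0 := by
  unfold cf
  rw [coeff_one]
  congr 1
  simp only [eq_iff_iff]
  constructor
  · intro h
    ext a
    have := DFunLike.congr_fun h a
    rw [ind_apply, Finsupp.zero_apply] at this
    by_cases hc : a ∈ T
    · rw [if_pos hc] at this
      omega
    · simp [hc]
  · rintro rfl
    ext a
    simp [ind_apply]

theorem cf_X {R : Type*} [CommRing R] (b : ℕ) (T : Finset ℕ) :
    cf (X b : MvPolynomial ℕ R) T = if T = {b} then 1 else 0 := by
  unfold cf
  rw [coeff_X]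
  congr 1
  simp only [eq_iff_iff]
  constructor
  · intro h
    ext a
    have := DFunLike.congr_fun h a
    rw [ind_apply, Finsupp.single_apply] at this
    rw [Finset.mem_singleton]
    by_cases h1 : b = a <;> by_cases h2 : a ∈ T <;> simp_all
    exact fun h => h1 h.symm
  · rintro rfl
    ext a
    simp [ind_apply, Finsupp.single_apply, eq_comm]

theorem X_supp {R : Type*} [CommRing R] {a : ℕ} {U : Finset ℕ} (ha : a ∈ U) :
    (X a : MvPolynomial ℕ R) ∈ supported R (U : Set ℕ) :=
  Algebra.subset_adjoin ⟨a, ha, rfl⟩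

theorem ND_pair {K : Type*} [Field K] {a b : ℕ} (hab : a ≠ b) :
    ND {a} {b} (cf (1 + X a * X b : MvPolynomial ℕ K)) := by
  have key : ∀ T ⊆ ({a} ∪ {b} : Finset ℕ), cf (1 + X a * X b : MvPolynomial ℕ K) T
      = (if T = ∅ then 1 else 0) + (if T ∩ {a} = {a} then 1 else 0) * if T ∩ {b} = {b} then 1 else 0 := by
    intro T hT
    rw [cf_add, cf_one, cf_mul (X_supp (Finset.mem_singleton_self a)) (X_supp (Finset.mem_singleton_self b)) (by simpa using hab) hT, cf_X, cf_X]
  intro v hv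
  have h1 := hv ∅ (by simp)
  have h2 := hv {b} (by simp)
  have e : ({a} : Finset ℕ).powerset = {∅, {a}} := by
    ext x; simp [Finset.subset_singleton_iff]
  rw [e, Finset.sum_pair (by simp), key _ (by simp), key _ (by simp)] at h1 h2
  simp [hab] at h1 h2
  intro A hA
  rcases Finset.subset_singleton_iff.1 hA with rfl | rfl
  · exact h1
  · exact h2

theorem ND_empty {K : Type*} [Field K] (f i j : ℕ) (w : ℕ → ℕ → ℕ → K) (h : j < i) (S : Finset ℕ):
    ND (Finset.Icc i j ∩ S) (Finset.Icc i j \ S) (cf (RYg w f i j)) := by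
  have e : RYg w f i j = 1 := by
    cases f <;> simp [RYg, h]
  rw [e, Finset.Icc_eq_empty (by omega)]
  intro v hv A hA
  have h1 := hv ∅ (by simp)
  simp [cf_one] at h1 hA
  rw [hA, h1]

theorem full_rank {K : Type*} [Field K] [Infinite K] (S : Finset ℕ) (L : ℕ) :
    ∀ i j, j + 1 = i + L → 2 * (Finset.Icc i j ∩ S).card = L →
    ∃ w : ℕ → ℕ → ℕ → K,
      ND (Finset.Icc i j ∩ S) (Finset.Icc i j \ S) (cf (RYg w L i j)) := by
  induction L using Nat.strong_induction_on with
  | _ L IH =>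
  intro i j hL hb
  rcases Nat.eq_zero_or_pos L with rfl | hpos
  · exact ⟨0, ND_empty _ _ _ _ (by omega) _⟩
  obtain ⟨L, rfl⟩ : ∃ l, L = l + 2 := ⟨L - 2, by omega⟩
  by_cases hs : i ∈ S ↔ j ∈ S
  · obtain ⟨k, hk1, hk2, hk3, hk4⟩ := exists_split S i j (by omega) (by omega) hs
    have hI : Finset.Icc i j = Finset.Icc i k ∪ Finset.Icc (k + 1) j := by
      ext a; simp; omega
    have hdI : Disjoint (Finset.Icc i k) (Finset.Icc (k + 1) j) := by
      rw [Finset.disjoint_left]; intro a; simp; omega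
    have hcard : (Finset.Icc i j ∩ S).card = (Finset.Icc i k ∩ S).card + (Finset.Icc (k + 1) j ∩ S).card := by
      rw [hI, Finset.union_inter_distrib_right, Finset.card_union_of_disjoint]
      exact Finset.disjoint_of_subset_left Finset.inter_subset_left
        (Finset.disjoint_of_subset_right Finset.inter_subset_left hdI)
    obtain ⟨w1, hw1⟩ := IH (k + 1 - i) (by omega) i k (by omega) (by omega)
    obtain ⟨w2, hw2⟩ := IH (j - k) (by omega) (k + 1) j (by omega) (by omega)
    set w0 : ℕ → ℕ → ℕ → K := fun a b c => if c ≤ k then w1 a b c else w2 a b c with hw0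
    set P1 := RYg w1 (k + 1 - i) i k with hP1
    set P2 := RYg w2 (j - k) (k + 1) j with hP2
    have hND := ND_mul (RYg_supported w1 (k + 1 - i) i k) (RYg_supported w2 (j - k) (k + 1) j) hdI
      Finset.inter_subset_left Finset.sdiff_subset Finset.inter_subset_left Finset.sdiff_subset hw1 hw2
    rw [← Finset.union_inter_distrib_right, ← Finset.union_sdiff_distrib, ← hI] at hND
    have hc2 : (Finset.Icc i j ∩ S).card = (Finset.Icc i j \ S).card := by
      have := Finset.card_inter_add_card_sdiff (Finset.Icc i j) S
      rw [Nat.card_Icc] at this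
      omega
    obtain ⟨x, hx⟩ := ND_generic hc2 (cf ((1 + X i * X j) * RYg w0 (L + 1) (i + 1) (j - 1))) _ hND
    set w' : ℕ → ℕ → ℕ → K := fun a b c =>
      if a = i ∧ c = j then (if b = k then x else 0) else w0 a b c with hw'
    refine ⟨w', ?_⟩
    convert hx using 1
    funext T
    rw [← cf_C_mul, ← cf_add]
    congr 1
    conv_lhs => unfold RYg
    rw [if_neg (by omega)]
    congr 1
    · congr 1
      apply RYg_congr _ _ _ _ _ _ (by omega) (by omega)
      intro a b c h1 h2 h3
      simp only [hw']
      rw [if_neg (by omega)]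
    · rw [Finset.sum_eq_single k]
      · have e1 : RYg w' (L + 1) i k = P1 := by
          apply RYg_congr _ _ _ _ _ _ (by omega) (by omega)
          intro a b c h1 h2 h3
          simp only [hw', hw0]
          rw [if_neg (by omega), if_pos (by omega)]
        have e2 : RYg w' (L + 1) (k + 1) j = P2 := by
          apply RYg_congr _ _ _ _ _ _ (by omega) (by omega)
          intro a b c h1 h2 h3
          simp only [hw', hw0]
          rw [if_neg (by omega), if_neg (by omega)]
        rw [e1, e2]
        simp [hw', mul_assoc]
        exact Or.inl rfl
      · intro b _ hb
        simp [hw', hb]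
      · intro h
        exfalso; apply h
        simp; omega
  · have hI : Finset.Icc i j = {i, j} ∪ Finset.Icc (i + 1) (j - 1) := by
      ext a; simp; omega
    have hdI : Disjoint {i, j} (Finset.Icc (i + 1) (j - 1)) := by
      rw [Finset.disjoint_left]; intro a; simp; omega
    have hcard : (Finset.Icc i j ∩ S).card = (({i, j} : Finset ℕ) ∩ S).card + (Finset.Icc (i + 1) (j - 1) ∩ S).card := by
      rw [hI, Finset.union_inter_distrib_right, Finset.card_union_of_disjoint]
      exact Finset.disjoint_of_subset_left Finset.inter_subset_left
        (Finset.disjoint_of_subset_right Finset.inter_subset_left hdI)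
    have hne : i ≠ j := by omega
    have hp : (({i, j} : Finset ℕ) ∩ S).card = 1 ∧
        ND ({i, j} ∩ S) ({i, j} \ S) (cf (1 + X i * X j : MvPolynomial ℕ K)) := by
      by_cases hi : i ∈ S
      · have hj : j ∉ S := fun h => hs ⟨fun _ => h, fun _ => hi⟩
        have e1 : ({i, j} : Finset ℕ) ∩ S = {i} := by
          ext a; simp only [Finset.mem_inter, Finset.mem_insert, Finset.mem_singleton]
          constructor
          · rintro ⟨rfl | rfl, h⟩ <;> [rfl; exact absurd h hj]
          · rintro rfl; exact ⟨Or.inl rfl, hi⟩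
        have e2 : ({i, j} : Finset ℕ) \ S = {j} := by
          ext a; simp only [Finset.mem_sdiff, Finset.mem_insert, Finset.mem_singleton]
          constructor
          · rintro ⟨rfl | rfl, h⟩ <;> [exact absurd hi h; rfl]
          · rintro rfl; exact ⟨Or.inr rfl, hj⟩
        rw [e1, e2]
        exact ⟨rfl, ND_pair hne⟩
      · have hj : j ∈ S := by by_contra h; exact hs ⟨fun h' => absurd h' hi, fun h' => absurd h' h⟩
        have e1 : ({i, j} : Finset ℕ) ∩ S = {j} := by
          ext a; simp only [Finset.mem_inter, Finset.mem_insert, Finset.mem_singleton]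
          constructor
          · rintro ⟨rfl | rfl, h⟩ <;> [exact absurd h hi; rfl]
          · rintro rfl; exact ⟨Or.inr rfl, hj⟩
        have e2 : ({i, j} : Finset ℕ) \ S = {i} := by
          ext a; simp only [Finset.mem_sdiff, Finset.mem_insert, Finset.mem_singleton]
          constructor
          · rintro ⟨rfl | rfl, h⟩ <;> [rfl; exact absurd hj h]
          · rintro rfl; exact ⟨Or.inl rfl, hi⟩
        rw [e1, e2, mul_comm]
        exact ⟨rfl, ND_pair hne.symm⟩
    obtain ⟨w, hw⟩ := IH L (by omega) (i + 1) (j - 1) (by omega) (by omega)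
    set w' : ℕ → ℕ → ℕ → K := fun a b c => if a = i ∧ c = j then 0 else w a b c with hw'
    refine ⟨w', ?_⟩
    have hXX : (1 + X i * X j : MvPolynomial ℕ K) ∈ supported K (({i, j} : Finset ℕ) : Set ℕ) :=
      add_mem (one_mem _) (mul_mem (X_supp (by simp)) (X_supp (by simp)))
    have hND := ND_mul hXX (RYg_supported w L (i + 1) (j - 1)) hdI
      Finset.inter_subset_left Finset.sdiff_subset Finset.inter_subset_left Finset.sdiff_subset hp.2 hw
    rw [← Finset.union_inter_distrib_right, ← Finset.union_sdiff_distrib, ← hI] at hND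
    convert hND using 2
    conv_lhs => unfold RYg
    rw [if_neg (by omega)]
    have e0 : RYg w' (L + 1) (i + 1) (j - 1) = RYg w L (i + 1) (j - 1) := by
      apply RYg_congr _ _ _ _ _ _ (by omega) (by omega)
      intro a b c h1 h2 h3
      simp only [hw']
      rw [if_neg (by omega)]
    rw [e0, Finset.sum_eq_zero, add_zero]
    intro k _
    simp [hw']
theorem central_sq (n : ℕ) : n.centralBinom ^ 2 * (2 * n + 1) ≤ 16 ^ n := by
  induction n with
  | zero => simp
  | succ n ih =>
    have h := Nat.succ_mul_centralBinom_succ n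
    have : (n + 1) ^ 2 * ((n + 1).centralBinom ^ 2 * (2 * (n + 1) + 1)) ≤ (n + 1) ^ 2 * 16 ^ (n + 1) := by
      calc _ = ((n + 1) * (n + 1).centralBinom) ^ 2 * (2 * n + 3) := by ring
        _ = (n.centralBinom ^ 2 * (2 * n + 1)) * (4 * ((2 * n + 1) * (2 * n + 3))) := by rw [h]; ring
        _ ≤ 16 ^ n * (16 * (n + 1) ^ 2) := Nat.mul_le_mul ih (by nlinarith)
        _ = _ := by ring
    exact Nat.le_of_mul_le_mul_left this (by positivity)

theorem anticonc (n q : ℕ) (h : 4 * (2 * q + 1) ^ 2 ≤ 2 * n + 1) :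
    2 * ((2 * q + 1) * n.centralBinom) ≤ 4 ^ n := by
  have h1 := central_sq n
  have : (2 * ((2 * q + 1) * n.centralBinom)) ^ 2 ≤ (4 ^ n) ^ 2 := by
    calc _ = n.centralBinom ^ 2 * (4 * (2 * q + 1) ^ 2) := by ring
      _ ≤ n.centralBinom ^ 2 * (2 * n + 1) := Nat.mul_le_mul_left _ h
      _ ≤ 16 ^ n := h1
      _ = _ := by rw [← pow_mul, mul_comm, pow_mul]; norm_num
  exact (Nat.pow_le_pow_iff_left (by norm_num)).1 this

theorem card_block (B : Finset ℕ) (n q : ℕ) (hB : B.card = 2 * n) :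
    (B.powerset.filter (fun T => n ≤ T.card + q ∧ T.card ≤ n + q)).card
      ≤ (2 * q + 1) * n.centralBinom := by
  have hsub : B.powerset.filter (fun T => n ≤ T.card + q ∧ T.card ≤ n + q) ⊆
      (Finset.Icc (n - q) (n + q)).biUnion (fun k => B.powersetCard k) := by
    intro T hT
    simp only [Finset.mem_filter, Finset.mem_powerset] at hT
    simp only [Finset.mem_biUnion, Finset.mem_Icc, Finset.mem_powersetCard]
    exact ⟨T.card, by omega, hT.1, rfl⟩
  refine (Finset.card_le_card hsub).trans (Finset.card_biUnion_le.trans ?_)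
  refine (Finset.sum_le_card_nsmul _ _ n.centralBinom ?_).trans ?_
  · intro k _
    rw [Finset.card_powersetCard, hB]
    exact Nat.choose_le_centralBinom k n
  · rw [smul_eq_mul, Nat.card_Icc]
    exact Nat.mul_le_mul_right _ (by omega)

theorem card_filter_union (U B : Finset ℕ) (P : Finset ℕ → Prop) [DecidablePred P]
    (A1 A2 : Finset (Finset ℕ)) (h : ∀ S ⊆ U ∪ B, P S → S ∩ U ∈ A1 ∧ S ∩ B ∈ A2) :
    ((U ∪ B).powerset.filter P).card ≤ A1.card * A2.card := by
  rw [← Finset.card_product]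
  refine Finset.card_le_card_of_injOn (fun S => (S ∩ U, S ∩ B)) ?_ ?_
  · intro S hS
    simp only [Finset.coe_filter, Finset.mem_powerset, Set.mem_ofPred_eq] at hS
    have := h S hS.1 hS.2
    simpa using this
  · intro S hS T hT hST
    simp only [Finset.coe_filter, Finset.mem_powerset, Set.mem_ofPred_eq] at hS hT
    simp only [Prod.mk.injEq] at hST
    rw [← Finset.inter_eq_left.2 hS.1, ← Finset.inter_eq_left.2 hT.1, Finset.inter_union_distrib_left,
      Finset.inter_union_distrib_left, hST.1, hST.2]

/-- All the prefixes of length `0, b, ..., j b` are balanced up to `q`. -/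
def badPre (π : ℕ → ℕ) (b q j : ℕ) (S : Finset ℕ) : Prop :=
  ∀ i ≤ j, i * b ≤ 2 * (S ∩ (Finset.Icc 1 (i * b)).image π).card + q ∧
    2 * (S ∩ (Finset.Icc 1 (i * b)).image π).card ≤ i * b + q

open Classical in
theorem card_bad_prefix (π : ℕ → ℕ) (N n q : ℕ) (hπ : Set.InjOn π (Set.Icc 1 N))
    (hq : 4 * (2 * q + 1) ^ 2 ≤ 2 * n + 1) (j : ℕ) (hj : j * (2 * n) ≤ N) :
    (((Finset.Icc 1 (j * (2 * n))).image π).powerset.filter (badPre π (2 * n) q j)).card * 2 ^ j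
      ≤ 2 ^ (j * (2 * n)) := by
  induction j with
  | zero =>
    simpa using Finset.card_filter_le (Finset.powerset (∅ : Finset ℕ)) _
  | succ j ih =>
    have hj' : j * (2 * n) ≤ N := by nlinarith
    have ih := ih hj'
    set b := 2 * n with hb
    have hjb : (j + 1) * b = j * b + b := by ring
    rw [hjb]
    set U := (Finset.Icc 1 (j * b)).image π with hU
    set B := (Finset.Icc (j * b + 1) (j * b + b)).image π with hB
    have hUB : (Finset.Icc 1 (j * b + b)).image π = U ∪ B := by
      rw [hU, hB, ← Finset.image_union]
      congr 1
      ext a; simp; omega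
    have hdis : Disjoint U B := by
      rw [Finset.disjoint_left]
      intro x h1 h2
      obtain ⟨a, ha, rfl⟩ := Finset.mem_image.1 h1
      obtain ⟨c, hc, hac⟩ := Finset.mem_image.1 h2
      simp only [Finset.mem_Icc] at ha hc
      have := hπ (x₁ := c) (x₂ := a) (by simp; omega) (by simp; omega) hac
      omega
    have hBc : B.card = 2 * n := by
      rw [hB, Finset.card_image_of_injOn]
      · simp; omega
      · refine hπ.mono ?_
        intro a; simp; omega
    rw [hUB]
    have := card_filter_union U B (badPre π b q (j + 1)) (U.powerset.filter (badPre π b q j))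
      (B.powerset.filter (fun T => n ≤ T.card + q ∧ T.card ≤ n + q)) ?_
    · have h2 := card_block B n q hBc
      have h3 := anticonc n q hq
      calc _ ≤ ((U.powerset.filter (badPre π b q j)).card * ((2 * q + 1) * n.centralBinom)) * 2 ^ (j + 1) :=
            Nat.mul_le_mul_right _ (this.trans (Nat.mul_le_mul_left _ h2))
        _ = ((U.powerset.filter (badPre π b q j)).card * 2 ^ j) * (2 * ((2 * q + 1) * n.centralBinom)) := by ring
        _ ≤ 2 ^ (j * b) * 4 ^ n := Nat.mul_le_mul ih h3
        _ = _ := by rw [pow_add, hb, pow_mul 2 2 n]; norm_num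
    · intro S hS hP
      have e1 : ∀ i ≤ j, S ∩ U ∩ (Finset.Icc 1 (i * b)).image π = S ∩ (Finset.Icc 1 (i * b)).image π := by
        intro i hi
        rw [Finset.inter_assoc]
        congr 1
        apply Finset.inter_eq_right.2
        apply Finset.image_subset_image
        apply Finset.Icc_subset_Icc_right
        exact Nat.mul_le_mul_right _ hi
      refine ⟨?_, ?_⟩
      · simp only [Finset.mem_filter, Finset.mem_powerset]
        refine ⟨Finset.inter_subset_right, ?_⟩
        intro i hi
        rw [e1 i hi]
        exact hP i (by omega)
      · simp only [Finset.mem_filter, Finset.mem_powerset]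
        refine ⟨Finset.inter_subset_right, ?_⟩
        have h1 := hP j (by omega)
        have h2 := hP (j + 1) le_rfl
        rw [hjb, hUB, Finset.inter_union_distrib_left, Finset.card_union_of_disjoint] at h2
        · rw [← hU] at h1
          omega
        · exact Finset.disjoint_of_subset_left Finset.inter_subset_right
            (Finset.disjoint_of_subset_right Finset.inter_subset_right hdis)

open Classical in
theorem card_bad (π : ℕ → ℕ) (N n q t : ℕ) (hπ : Set.BijOn π (Set.Icc 1 N) (Set.Icc 1 N))
    (hq : 4 * (2 * q + 1) ^ 2 ≤ 2 * n + 1) (ht : t * (2 * n) ≤ N) :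
    ((Finset.Icc 1 N).powerset.filter (badPre π (2 * n) q t)).card * 2 ^ t ≤ 2 ^ N := by
  have h1 := card_bad_prefix π N n q hπ.injOn hq t ht
  set U := (Finset.Icc 1 (t * (2 * n))).image π with hU
  have hUs : U ⊆ Finset.Icc 1 N := by
    intro x hx
    obtain ⟨a, ha, rfl⟩ := Finset.mem_image.1 hx
    simp only [Finset.mem_Icc] at ha
    have := hπ.mapsTo (show a ∈ Set.Icc 1 N by simp; omega)
    simpa using this
  have hUc : U.card = t * (2 * n) := by
    rw [hU, Finset.card_image_of_injOn]
    · simp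
    · refine hπ.injOn.mono ?_
      intro a; simp; omega
  have := card_filter_union U (Finset.Icc 1 N \ U) (badPre π (2 * n) q t) (U.powerset.filter (badPre π (2 * n) q t))
      (Finset.Icc 1 N \ U).powerset ?_
  · rw [Finset.union_sdiff_of_subset hUs, Finset.card_powerset, Finset.card_sdiff_of_subset hUs, hUc, Nat.card_Icc] at this
    calc _ ≤ _ := Nat.mul_le_mul_right _ this
      _ = ((U.powerset.filter (badPre π (2 * n) q t)).card * 2 ^ t) * 2 ^ (N + 1 - 1 - t * (2 * n)) := by ring
      _ ≤ 2 ^ (t * (2 * n)) * 2 ^ (N + 1 - 1 - t * (2 * n)) := Nat.mul_le_mul_right _ h1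
      _ = _ := by rw [← pow_add]; congr 1; omega
  · intro S hS hP
    refine ⟨?_, by simp⟩
    simp only [Finset.mem_filter, Finset.mem_powerset]
    refine ⟨Finset.inter_subset_right, ?_⟩
    intro i hi
    have e1 : S ∩ U ∩ (Finset.Icc 1 (i * (2 * n))).image π = S ∩ (Finset.Icc 1 (i * (2 * n))).image π := by
      rw [Finset.inter_assoc]
      congr 1
      apply Finset.inter_eq_right.2
      apply Finset.image_subset_image
      apply Finset.Icc_subset_Icc_right
      exact Nat.mul_le_mul_right _ hi
    rw [e1]
    exact hP i hi

theorem exists_good (N n q t m : ℕ) (hN : Even N) (hN0 : 0 < N) (π : Fin m → ℕ → ℕ)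
    (hπ : ∀ i, Set.BijOn (π i) (Set.Icc 1 N) (Set.Icc 1 N))
    (hq : 4 * (2 * q + 1) ^ 2 ≤ 2 * n + 1) (ht : t * (2 * n) ≤ N) (hm : m * N < 2 ^ t) :
    ∃ S ⊆ Finset.Icc 1 N, 2 * S.card = N ∧ ∀ i, ¬ badPre (π i) (2 * n) q t S := by
  classical
  obtain ⟨h, hh⟩ := hN
  by_contra hc
  push Not at hc
  have hsub : (Finset.Icc 1 N).powersetCard h ⊆ Finset.univ.biUnion
      (fun i => (Finset.Icc 1 N).powerset.filter (badPre (π i) (2 * n) q t)) := by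
    intro S hS
    rw [Finset.mem_powersetCard] at hS
    obtain ⟨i, hi⟩ := hc S hS.1 (by omega)
    simp only [Finset.mem_biUnion, Finset.mem_univ, true_and, Finset.mem_filter, Finset.mem_powerset]
    exact ⟨i, hS.1, hi⟩
  have h1 := (Finset.card_le_card hsub).trans Finset.card_biUnion_le
  rw [Finset.card_powersetCard, Nat.card_Icc] at h1
  have h2 := Nat.four_pow_le_two_mul_self_mul_centralBinom h (by omega)
  have h3 : (N + 1 - 1).choose h = h.centralBinom := by
    rw [Nat.centralBinom]; congr 1; omega
  rw [h3] at h1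
  have h4 : h.centralBinom * 2 ^ t ≤ m * 2 ^ N := by
    calc _ ≤ _ := Nat.mul_le_mul_right _ h1
      _ = ∑ i, ((Finset.Icc 1 N).powerset.filter (badPre (π i) (2 * n) q t)).card * 2 ^ t := by
          rw [Finset.sum_mul]
      _ ≤ ∑ _i : Fin m, 2 ^ N := Finset.sum_le_sum fun i _ => card_bad (π i) N n q t (hπ i) hq ht
      _ = _ := by simp
  have h5 : 2 ^ N ≤ N * h.centralBinom := by
    have e1 : 2 ^ N = 4 ^ h := by rw [hh, ← two_mul, pow_mul]; norm_num
    have e2 : N = 2 * h := by omega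
    rw [e1]
    rw [← e2] at h2
    exact h2
  have h6 : 2 ^ N * 2 ^ t ≤ 2 ^ N * (m * N) := by
    calc _ ≤ N * h.centralBinom * 2 ^ t := Nat.mul_le_mul_right _ h5
      _ = N * (h.centralBinom * 2 ^ t) := by ring
      _ ≤ N * (m * 2 ^ N) := Nat.mul_le_mul_left _ h4
      _ = _ := by ring
  have := Nat.le_of_mul_le_mul_left h6 (by positivity)
  omega

theorem RY_eq (F : Type*) [Field F] (f i j : ℕ) : RY F f i j = RYg (wv F) f i j := by
  induction f generalizing i j with
  | zero => rfl
  | succ f ih =>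
    unfold RY RYg
    simp only [ih]

theorem raz_ND (F : Type*) [Field F] (N : ℕ) (S : Finset ℕ) (hb : 2 * (Finset.Icc 1 N ∩ S).card = N) :
    ND (Finset.Icc 1 N ∩ S) (Finset.Icc 1 N \ S) (cf (razPoly F N)) := by
  have hinj := IsFractionRing.injective (MvPolynomial (ℕ × ℕ × ℕ) F) (Gf F)
  have : Infinite (Gf F) := Infinite.of_injective _ hinj
  obtain ⟨w, hw⟩ := full_rank (K := Gf F) S N 1 N (by omega) hb
  set ww : ℕ → ℕ → ℕ → MvPolynomial (ℕ × ℕ × ℕ) F := fun a b c => X (a, b, c) with hww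
  set φ : MvPolynomial (ℕ × ℕ × ℕ) F →+* Gf F :=
    (aeval (fun t : ℕ × ℕ × ℕ => w t.1 t.2.1 t.2.2) : MvPolynomial (ℕ × ℕ × ℕ) F →ₐ[F] Gf F).toRingHom with hφ
  have e1 : RYg w N 1 N = MvPolynomial.map φ (RYg ww N 1 N) := by
    rw [RYg_map]
    congr 1
    funext a b c
    simp [hφ, hww]
  have e2 : razPoly F N = MvPolynomial.map (algebraMap _ (Gf F)) (RYg ww N 1 N) := by
    rw [RYg_map, razPoly, RY_eq]
    rfl
  have hc2 : (Finset.Icc 1 N ∩ S).card = (Finset.Icc 1 N \ S).card := by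
    have := Finset.card_inter_add_card_sdiff (Finset.Icc 1 N) S
    rw [Nat.card_Icc] at this
    omega
  have h1 : cf (RYg w N 1 N) = fun T => φ (cf (RYg ww N 1 N) T) := by
    funext T; rw [e1, cf_map]
  have h2 : cf (razPoly F N) = fun T => algebraMap _ (Gf F) (cf (RYg ww N 1 N) T) := by
    funext T; rw [e2, cf_map]
  rw [h1] at hw
  rw [h2]
  exact ND_descend φ _ hinj hc2 _ hw

def HasRank {K : Type*} [CommRing K] (S Z : Finset ℕ) (c : Finset ℕ → K) (n : ℕ) : Prop :=
  ∃ l r : Fin n → Finset ℕ → K, ∀ A ⊆ S, ∀ B ⊆ Z, c (A ∪ B) = ∑ q, l q A * r q B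

theorem rank_contra {K : Type*} [Field K] {S Z : Finset ℕ} {m : ℕ} (c : Fin m → Finset ℕ → K)
    (n : Fin m → ℕ) (hr : ∀ i, HasRank S Z (c i) (n i)) (hlt : ∑ i, n i < 2 ^ S.card) :
    ¬ ND S Z (fun T => ∑ i, c i T) := by
  intro hND
  choose l r h using hr
  set Mt : Matrix (Σ i, Fin (n i)) S.powerset K := fun q A => l q.1 q.2 A.1 with hMt
  have hk : LinearMap.ker (Matrix.toLin' Mt) ≠ ⊥ := by
    apply LinearMap.ker_ne_bot_of_finrank_lt
    simpa using hlt
  obtain ⟨v, hv, hv0⟩ := (Submodule.ne_bot_iff _).1 hk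
  rw [LinearMap.mem_ker, Matrix.toLin'_apply] at hv
  apply hv0
  have := hND (fun A => if hA : A ∈ S.powerset then v ⟨A, hA⟩ else 0) ?_
  · ext ⟨A, hA⟩
    have := this A (Finset.mem_powerset.1 hA)
    simpa [Finset.mem_powerset.1 hA] using this
  · intro B hB
    have hq : ∀ i (q : Fin (n i)), ∑ A : S.powerset, l i q A.1 * v A = 0 := by
      intro i q
      exact congrFun hv ⟨i, q⟩
    calc _ = ∑ A : S.powerset, v A * ∑ i, ∑ q, l i q A.1 * r i q B := by
            rw [← Finset.sum_coe_sort]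
            refine Finset.sum_congr rfl fun A _ => ?_
            rw [dif_pos A.2]
            congr 1
            exact Finset.sum_congr rfl fun i _ => h i _ (Finset.mem_powerset.1 A.2) _ hB
      _ = ∑ i, ∑ q, (∑ A : S.powerset, l i q A.1 * v A) * r i q B := by
            simp only [Finset.mul_sum, Finset.sum_mul]
            rw [Finset.sum_comm]
            refine Finset.sum_congr rfl fun i _ => ?_
            rw [Finset.sum_comm]
            refine Finset.sum_congr rfl fun q _ => Finset.sum_congr rfl fun A _ => ?_
            ring
      _ = 0 := by simp only [hq, zero_mul, Finset.sum_const_zero]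

theorem rank_contra_sum {K : Type*} [Field K] {S Z : Finset ℕ} {m : ℕ} (f : Fin m → MvPolynomial ℕ K)
    (n : Fin m → ℕ) (hr : ∀ i, HasRank S Z (cf (f i)) (n i)) (hlt : ∑ i, n i < 2 ^ S.card) :
    ¬ ND S Z (cf (∑ i, f i)) := by
  have e : cf (∑ i, f i) = fun T => ∑ i, cf (f i) T := by
    funext T
    simp [cf, coeff_sum]
  rw [e]
  exact rank_contra _ n hr hlt

theorem hasRank_of_fintype {K Q : Type*} [CommRing K] [Fintype Q] {S Z : Finset ℕ} {c : Finset ℕ → K}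
    (l r : Q → Finset ℕ → K) (h : ∀ A ⊆ S, ∀ B ⊆ Z, c (A ∪ B) = ∑ q, l q A * r q B) :
    HasRank S Z c (Fintype.card Q) := by
  let e := Fintype.equivFin Q
  refine ⟨fun q => l (e.symm q), fun q => r (e.symm q), fun A hA B hB => ?_⟩
  rw [h A hA B hB]
  exact (Equiv.sum_comp e.symm (fun q => l q A * r q B)).symm

theorem hasRank_cut {K : Type*} [Field K] {w : ℕ} {S Z U V : Finset ℕ} (hUV : Disjoint U V)
    (hS : S ⊆ U ∪ V) (hZ : Z ⊆ U ∪ V) (P R : Fin w → MvPolynomial ℕ K)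
    (hP : ∀ a, P a ∈ supported K (U : Set ℕ)) (hR : ∀ a, R a ∈ supported K (V : Set ℕ)) :
    HasRank S Z (cf (∑ a, P a * R a)) (w * (2 ^ (S ∩ U).card * 2 ^ (Z ∩ V).card)) := by
  have := hasRank_of_fintype (Q := Fin w × (S ∩ U).powerset × (Z ∩ V).powerset) (S := S) (Z := Z)
    (c := cf (∑ a, P a * R a))
    (fun q A => if A ∩ U = q.2.1.1 then cf (R q.1) ((A ∩ V) ∪ q.2.2.1) else 0)
    (fun q B => if B ∩ V = q.2.2.1 then cf (P q.1) (q.2.1.1 ∪ (B ∩ U)) else 0) ?_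
  · convert this using 1
    rw [Fintype.card_prod, Fintype.card_prod, Fintype.card_fin, Fintype.card_coe, Fintype.card_coe,
      Finset.card_powerset, Finset.card_powerset]
  · intro A hA B hB
    have e0 : cf (∑ a, P a * R a) (A ∪ B) = ∑ a, cf (P a * R a) (A ∪ B) := by
      simp [cf, coeff_sum]
    rw [e0, Fintype.sum_prod_type]
    refine Finset.sum_congr rfl fun a _ => ?_
    rw [cf_mul (hP a) (hR a) hUV (Finset.union_subset (hA.trans hS) (hB.trans hZ)),
      Fintype.sum_prod_type]
    rw [Finset.sum_eq_single (⟨A ∩ U, Finset.mem_powerset.2 (Finset.inter_subset_inter_right hA)⟩ : (S ∩ U).powerset)]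
    · rw [Finset.sum_eq_single (⟨B ∩ V, Finset.mem_powerset.2 (Finset.inter_subset_inter_right hB)⟩ : (Z ∩ V).powerset)]
      · simp only [if_true]
        rw [Finset.union_inter_distrib_right, Finset.union_inter_distrib_right, mul_comm]
      · rintro ⟨b, hb⟩ _ hne
        have : ¬ (B ∩ V = b) := fun h => hne (Subtype.ext h.symm)
        simp [this]
      · simp
    · rintro ⟨b, hb⟩ _ hne
      have : ¬ (A ∩ U = b) := fun h => hne (Subtype.ext h.symm)
      simp [this]
    · simp

theorem matrix_prod_mem {K : Type*} [CommRing K] {w : ℕ} (𝒜 : Subalgebra K (MvPolynomial ℕ K))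
    (l : List (Matrix (Fin w) (Fin w) (MvPolynomial ℕ K))) (h : ∀ A ∈ l, ∀ i j, A i j ∈ 𝒜) (i j : Fin w) :
    l.prod i j ∈ 𝒜 := by
  induction l generalizing i j with
  | nil =>
    rw [List.prod_nil, Matrix.one_apply]
    split_ifs
    · exact one_mem _
    · exact zero_mem _
  | cons A l ih =>
    rw [List.prod_cons, Matrix.mul_apply]
    refine sum_mem fun k _ => mul_mem (h _ (by simp) _ _) (ih (fun B hB => h B (by simp [hB])) _ _)

theorem roabp_cut {K : Type*} [Field K] {N w : ℕ} {π : ℕ → ℕ} (hw : 0 < w)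
    {M : Fin N → Matrix (Fin w) (Fin w) (MvPolynomial ℕ K)} (hM : IsROABP N w π M) (p : ℕ) :
    ∃ P R : Fin w → MvPolynomial ℕ K,
      (∀ a, P a ∈ supported K (((Finset.Icc 1 p).image π : Finset ℕ) : Set ℕ)) ∧
      (∀ a, R a ∈ supported K (((Finset.Icc (p + 1) N).image π : Finset ℕ) : Set ℕ)) ∧
      mprodVal hw M = ∑ a, P a * R a := by
  have hent : ∀ (U : Finset ℕ) (ℓ : Fin N), π (ℓ.val + 1) ∈ U → ∀ i j, M ℓ i j ∈ supported K (U : Set ℕ) := by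
    intro U ℓ hℓ i j
    obtain ⟨a, b, h⟩ := hM.2 ℓ i j
    rw [h]
    exact add_mem (Subalgebra.algebraMap_mem _ _) (mul_mem (Subalgebra.algebraMap_mem _ _) (X_supp hℓ))
  refine ⟨fun a => ((List.ofFn M).take p).prod ⟨0, hw⟩ a, fun a => ((List.ofFn M).drop p).prod a ⟨0, hw⟩, ?_, ?_, ?_⟩
  · intro a
    apply matrix_prod_mem
    intro A hA
    obtain ⟨k, hk, rfl⟩ := List.mem_iff_getElem.1 hA
    simp only [List.length_take, List.length_ofFn] at hk
    rw [List.getElem_take, List.getElem_ofFn]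
    apply hent
    apply Finset.mem_image_of_mem
    simp; omega
  · intro a
    apply matrix_prod_mem
    intro A hA
    obtain ⟨k, hk, rfl⟩ := List.mem_iff_getElem.1 hA
    simp only [List.length_drop, List.length_ofFn] at hk
    rw [List.getElem_drop, List.getElem_ofFn]
    apply hent
    apply Finset.mem_image_of_mem
    simp; omega
  · unfold mprodVal
    conv_lhs => rw [← List.take_append_drop p (List.ofFn M), List.prod_append, Matrix.mul_apply]

theorem roabp_rank {K : Type*} [Field K] {N w : ℕ} {π : ℕ → ℕ} (hw : 0 < w)
    {M : Fin N → Matrix (Fin w) (Fin w) (MvPolynomial ℕ K)} (hM : IsROABP N w π M) (p k : ℕ)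
    (hp : p ≤ N) (S : Finset ℕ) (hS : S ⊆ Finset.Icc 1 N) (hb : 2 * S.card = N)
    (hk : 2 * (S ∩ (Finset.Icc 1 p).image π).card + k ≤ p ∨
      p + k ≤ 2 * (S ∩ (Finset.Icc 1 p).image π).card) :
    ∃ n, HasRank S (Finset.Icc 1 N \ S) (cf (mprodVal hw M)) n ∧ n * 2 ^ k ≤ w * 2 ^ S.card := by
  obtain ⟨P, R, hP, hR, h⟩ := roabp_cut hw hM p
  set U := (Finset.Icc 1 p).image π with hU
  set V := (Finset.Icc (p + 1) N).image π with hV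
  set Z := Finset.Icc 1 N \ S with hZ
  have hinj : ∀ a ∈ Finset.Icc 1 N, ∀ b ∈ Finset.Icc 1 N, π a = π b → a = b := by
    intro a ha b hb
    exact hM.1.injOn (by simpa using ha) (by simpa using hb)
  have hUV : Disjoint U V := by
    rw [Finset.disjoint_left]
    intro x h1 h2
    obtain ⟨a, ha, rfl⟩ := Finset.mem_image.1 h1
    obtain ⟨b, hb, hab⟩ := Finset.mem_image.1 h2
    simp only [Finset.mem_Icc] at ha hb
    have := hinj b (by simp; omega) a (by simp; omega) hab
    omega
  have hUVN : U ∪ V = Finset.Icc 1 N := by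
    rw [hU, hV, ← Finset.image_union]
    have : Finset.Icc 1 p ∪ Finset.Icc (p + 1) N = Finset.Icc 1 N := by ext; simp; omega
    rw [this]
    have := hM.1.image_eq
    apply Finset.coe_injective
    simpa using this
  have hUc : U.card = p := by
    rw [hU, Finset.card_image_of_injOn]
    · simp
    · intro a ha b hb
      simp only [Finset.coe_Icc, Set.mem_Icc] at ha hb
      exact hinj a (by simp; omega) b (by simp; omega)
  have hZs : Z ⊆ Finset.Icc 1 N := Finset.sdiff_subset
  have hsplit : ∀ T ⊆ Finset.Icc 1 N, T.card = (T ∩ U).card + (T ∩ V).card := by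
    intro T hT
    rw [← Finset.card_union_of_disjoint, ← Finset.inter_union_distrib_left, hUVN,
      Finset.inter_eq_left.2 hT]
    exact Finset.disjoint_of_subset_left Finset.inter_subset_right
        (Finset.disjoint_of_subset_right Finset.inter_subset_right hUV)
  have h1 := hsplit S hS
  have h2 := hsplit Z hZs
  have h3 : S.card + Z.card = N := by
    have := Finset.card_sdiff_add_card_eq_card hS
    rw [Nat.card_Icc, ← hZ] at this
    omega
  have h4 : (S ∩ U).card + (Z ∩ U).card = p := by
    rw [← hUc, ← Finset.card_union_of_disjoint, ← Finset.union_inter_distrib_right, hZ,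
      Finset.union_sdiff_of_subset hS, ← hUVN, Finset.union_inter_cancel_left]
    exact Finset.disjoint_of_subset_left Finset.inter_subset_left
        (Finset.disjoint_of_subset_right Finset.inter_subset_left Finset.disjoint_sdiff)
  rw [h]
  rcases hk with hk | hk
  · refine ⟨_, hasRank_cut hUV (hUVN ▸ hS) (hUVN ▸ hZs) P R hP hR, ?_⟩
    rw [mul_assoc, ← pow_add, ← pow_add]
    exact Nat.mul_le_mul_left _ (Nat.pow_le_pow_right (by norm_num) (by omega))
  · have e : ∑ a, P a * R a = ∑ a, R a * P a := Finset.sum_congr rfl fun a _ => mul_comm _ _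
    rw [e]
    rw [Finset.union_comm] at hUVN
    refine ⟨_, hasRank_cut hUV.symm (hUVN ▸ hS) (hUVN ▸ hZs) R P hR hP, ?_⟩
    rw [mul_assoc, ← pow_add, ← pow_add]
    exact Nat.mul_le_mul_left _ (Nat.pow_le_pow_right (by norm_num) (by omega))

theorem pow_five_le (q : ℕ) (hq : 32 ≤ q) : (q + 1) ^ 5 ≤ 2 ^ q := by
  induction q, hq using Nat.le_induction with
  | base => norm_num
  | succ q hq ih =>
    have h1 : 31 * (q + 2) ≤ 32 * (q + 1) := by omega
    have h2 : (31 * (q + 2)) ^ 5 ≤ (32 * (q + 1)) ^ 5 := Nat.pow_le_pow_left h1 5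
    rw [mul_pow, mul_pow] at h2
    rw [pow_succ 2 q]
    have : (q + 1 + 1) ^ 5 = (q + 2) ^ 5 := by ring
    rw [this]
    generalize (q + 2) ^ 5 = x at *
    generalize (q + 1) ^ 5 = y at *
    generalize 2 ^ q = z at *
    norm_num at h2
    omega

theorem core_bound (F : Type) [Field F] (N q : ℕ) (hN : Even N) (hq : 32 ≤ q) (hqN : q ^ 5 ≤ N)
    (hNq : N < (q + 1) ^ 5) (m : ℕ) (sw : Fin m → ℕ) (hsw : ∀ i, 0 < sw i) (s : ℕ)
    (hs : ∀ i, sw i ≤ s) (π : Fin m → ℕ → ℕ)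
    (M : (i : Fin m) → Fin N → Matrix (Fin (sw i)) (Fin (sw i)) (MvPolynomial ℕ (Gf F)))
    (hM : ∀ i, IsROABP N (sw i) (π i) (M i)) (hm : m < 2 ^ q) (hms : m * s < 2 ^ (q + 1)) :
    razPoly F N ≠ ∑ i : Fin m, mprodVal (hsw i) (M i) := by
  intro heq
  have h5 := pow_five_le q hq
  have hN0 : 0 < N := lt_of_lt_of_le (by positivity) hqN
  have ht : (2 * q) * (2 * (2 * (2 * q + 1) ^ 2)) ≤ N := by
    refine le_trans ?_ hqN
    have e1 : 8 * (2 * q + 1) ^ 2 ≤ q ^ 4 := by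
      have h1 : 3 * (2 * q + 1) ≤ q ^ 2 := by nlinarith
      have h2 := Nat.pow_le_pow_left h1 2
      calc _ ≤ (3 * (2 * q + 1)) ^ 2 := by rw [mul_pow]; omega
        _ ≤ _ := h2
        _ = _ := by ring
    calc _ = q * (8 * (2 * q + 1) ^ 2) := by ring
      _ ≤ q * q ^ 4 := Nat.mul_le_mul_left _ e1
      _ = _ := by ring
  have hmN : m * N < 2 ^ (2 * q) := by
    rw [two_mul, pow_add]
    exact Nat.mul_lt_mul'' hm (lt_of_lt_of_le hNq h5)
  obtain ⟨S, hS, hcard, hgood⟩ := exists_good N (2 * (2 * q + 1) ^ 2) q (2 * q) m hN hN0 π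
    (fun i => (hM i).1) (by omega) ht hmN
  have hSI : Finset.Icc 1 N ∩ S = S := Finset.inter_eq_right.2 hS
  have hND := raz_ND F N S (by rw [hSI]; exact hcard)
  rw [hSI] at hND
  have hr : ∀ i, ∃ n, HasRank S (Finset.Icc 1 N \ S) (cf (mprodVal (hsw i) (M i))) n ∧
      n * 2 ^ (q + 1) ≤ sw i * 2 ^ S.card := by
    intro i
    have := hgood i
    unfold badPre at this
    push Not at this
    obtain ⟨j, hj, hb⟩ := this
    refine roabp_rank (hsw i) (hM i) (j * (2 * (2 * (2 * q + 1) ^ 2))) (q + 1)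
      (le_trans (Nat.mul_le_mul_right _ hj) ht) S hS hcard ?_
    by_cases hc : j * (2 * (2 * (2 * q + 1) ^ 2)) ≤
        2 * (S ∩ (Finset.Icc 1 (j * (2 * (2 * (2 * q + 1) ^ 2)))).image (π i)).card + q
    · right
      have := hb hc
      omega
    · left
      omega
  choose n hn1 hn2 using hr
  refine rank_contra_sum (fun i => mprodVal (hsw i) (M i)) n hn1 ?_ ?_
  · have h1 : (∑ i, n i) * 2 ^ (q + 1) ≤ (m * s) * 2 ^ S.card := by
      rw [Finset.sum_mul]
      calc _ ≤ ∑ _i : Fin m, s * 2 ^ S.card :=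
            Finset.sum_le_sum fun i _ => (hn2 i).trans (Nat.mul_le_mul_right _ (hs i))
        _ = _ := by simp [mul_assoc]
    have h2 : (m * s) * 2 ^ S.card < 2 ^ S.card * 2 ^ (q + 1) := by
      rw [mul_comm]
      exact Nat.mul_lt_mul_of_pos_left hms (by positivity)
    exact Nat.lt_of_mul_lt_mul_right (lt_of_le_of_lt h1 h2)
  · rw [heq] at hND
    exact hND

/-- Theorem (sum of ROABPs lower bound): any representation of the Raz–Yehudayoff
polynomial `g` as a sum of `m` ROABPs of widths `s_i ≥ 2` satisfies
`m ≥ 2^{c₁ N^{1/5}} / s^{c₂ log N}` where `s = max_i s_i`. -/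
theorem sum_of_roabp_lower_bound :
    ∃ c₁ c₂ : ℝ, 0 < c₁ ∧ 0 < c₂ ∧ ∃ N₀ : ℕ, ∀ (F : Type) [Field F] (N : ℕ),
      N₀ ≤ N → Even N →
      ∀ (m : ℕ) (sw : Fin m → ℕ) (hsw : ∀ i, 2 ≤ sw i)
        (π : Fin m → ℕ → ℕ)
        (M : (i : Fin m) → Fin N → Matrix (Fin (sw i)) (Fin (sw i)) (MvPolynomial ℕ (Gf F))),
        (∀ i, IsROABP N (sw i) (π i) (M i)) →
        razPoly F N = ∑ i : Fin m, mprodVal (show 0 < sw i by have := hsw i; omega) (M i) →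
        (2 : ℝ) ^ (c₁ * (N : ℝ) ^ ((1 : ℝ) / 5)) /
            ((Finset.univ.sup sw : ℕ) : ℝ) ^ (c₂ * Real.logb 2 N) ≤ (m : ℝ) := by
  refine ⟨1, 1, one_pos, one_pos, 32 ^ 5, ?_⟩
  intro F _ N hN0 hN m sw hsw π M hM heq
  by_contra hlt
  push Not at hlt
  rw [one_mul, one_mul] at hlt
  set s := Finset.univ.sup sw with hs
  set r : ℝ := (N : ℝ) ^ ((1 : ℝ) / 5) with hr
  have hr0 : 0 ≤ r := by positivity
  have hr5 : r ^ 5 = N := by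
    rw [hr, ← Real.rpow_natCast, ← Real.rpow_mul (by positivity)]
    norm_num
  have hfl := Nat.floor_le hr0
  have hfl2 := Nat.lt_floor_add_one r
  set q := ⌊r⌋₊ with hq
  have hqN : q ^ 5 ≤ N := by
    have : (q : ℝ) ^ 5 ≤ N := by rw [← hr5]; gcongr
    exact_mod_cast this
  have hNq : N < (q + 1) ^ 5 := by
    have : (N : ℝ) < ((q : ℝ) + 1) ^ 5 := by rw [← hr5]; gcongr
    exact_mod_cast this
  have hq32 : 32 ≤ q := by
    by_contra h
    have : (q + 1) ^ 5 ≤ 32 ^ 5 := Nat.pow_le_pow_left (by omega) 5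
    omega
  have hle : ∀ i, sw i ≤ s := fun i => Finset.le_sup (Finset.mem_univ i)
  have hkey : m < 2 ^ q ∧ m * s < 2 ^ (q + 1) := by
    rcases Nat.eq_zero_or_pos m with h0 | hpos
    · subst h0
      simp
    · have hs2 : 2 ≤ s := (hsw ⟨0, hpos⟩).trans (hle _)
      have hs1 : (1 : ℝ) ≤ s := by exact_mod_cast (by omega : 1 ≤ s)
      have hlog : (1 : ℝ) ≤ Real.logb 2 N := by
        rw [Real.le_logb_iff_rpow_le (by norm_num) (by positivity), Real.rpow_one]
        exact_mod_cast (by omega : 2 ≤ N)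
      have h1 : (s : ℝ) ≤ (s : ℝ) ^ Real.logb 2 N := by
        calc (s : ℝ) = (s : ℝ) ^ (1 : ℝ) := (Real.rpow_one _).symm
          _ ≤ _ := Real.rpow_le_rpow_of_exponent_le hs1 hlog
      have hpos' : (0 : ℝ) < (s : ℝ) ^ Real.logb 2 N := by linarith
      rw [lt_div_iff₀ hpos'] at hlt
      have h2 : (2 : ℝ) ^ r ≤ 2 ^ (q + 1) := by
        rw [← Real.rpow_natCast]
        apply Real.rpow_le_rpow_of_exponent_le (by norm_num)
        push_cast
        exact hfl2.le
      have h3 : (m : ℝ) * s < 2 ^ (q + 1) := by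
        calc (m : ℝ) * s ≤ m * (s : ℝ) ^ Real.logb 2 N := by gcongr
          _ < _ := hlt
          _ ≤ _ := h2
      have h4 : m * s < 2 ^ (q + 1) := by exact_mod_cast h3
      refine ⟨?_, h4⟩
      have : m * 2 ≤ m * s := Nat.mul_le_mul_left _ hs2
      rw [pow_succ] at h4
      omega
  exact core_bound F N q hN hq32 hqN hNq m sw (fun i => by have := hsw i; omega) s hle π M hM
    hkey.1 hkey.2 heq

end
end

section
/- There is a constant C > 0 such that for all positive integers S, M_1, M_2 with √S ≤ M_1 ≤ S/2 and S/4 ≤ M_2 ≤ 3S/4 the following holds: if A ⊆ [S] is a fixed set with |A| = M_1 and T is a uniformly random subset of [S] of size M_2, then for every integer a, Pr[|T ∩ A| = a] ≤ C·S^{−1/4}. Equivalently, binom(M_1, a)·binom(S − M_1, M_2 − a) / binom(S, M_2) ≤ C·S^{−1/4} for every integer a. -/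
open MvPolynomial

noncomputable section

/-- Real form of the absorption identity for binomial coefficients. -/
lemma hyp_choose_succ (m c : ℕ) :
    (m.choose (c+1) : ℝ) * ((c:ℝ)+1) = (m.choose c : ℝ) * ((m:ℝ) - c) := by
  rcases le_or_gt c m with h | h
  · have := Nat.choose_succ_right_eq m c
    rw [← Nat.cast_sub h]
    exact_mod_cast this
  · rw [Nat.choose_eq_zero_of_lt h, Nat.choose_eq_zero_of_lt (by omega)]; simp

/-- One step of the ratio argument. -/
lemma hyp_step (K m n b s : ℕ) (hKm : K ≤ m) (h1 : K + m ≤ 4*n) (h2 : 4*n ≤ 3*(K+m))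
    (hs : 8 ≤ s) (hsK : s*s ≤ K) (hb : b*(K+m) ≤ K*n + s*(K+m)) :
    b + 1 ≤ n ∧
    (K.choose b : ℝ) * (m.choose (n-b)) ≤
      (1 + 256/(s:ℝ)) * ((K.choose (b+1) : ℝ) * (m.choose (n-(b+1)))) := by
  have hKm' : (K:ℝ) ≤ m := by exact_mod_cast hKm
  have h1' : (K:ℝ) + m ≤ 4*n := by exact_mod_cast h1
  have h2' : 4*(n:ℝ) ≤ 3*(K+m) := by exact_mod_cast h2
  have hs' : 8 ≤ (s:ℝ) := by exact_mod_cast hs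
  have hsK' : (s:ℝ)*s ≤ K := by exact_mod_cast hsK
  have hb' : (b:ℝ)*(K+m) ≤ K*n + s*(K+m) := by exact_mod_cast hb
  have hK0 : (64:ℝ) ≤ K := by nlinarith
  have hN0 : (0:ℝ) < K + m := by linarith
  have hs8 : 8 * (s:ℝ) ≤ s*s := by nlinarith
  -- bounds on b
  have hbK : (b:ℝ) ≤ 3/4*K + s := by
    have : (b:ℝ)*(K+m) ≤ (3/4*K + s)*(K+m) := by nlinarith
    exact le_of_mul_le_mul_right this hN0
  have hbn : (b:ℝ) ≤ n/2 + s := by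
    have : (b:ℝ)*(K+m) ≤ (n/2 + s)*(K+m) := by
      have : (0:ℝ) ≤ n := by positivity
      nlinarith
    exact le_of_mul_le_mul_right this hN0
  have e1 : (s:ℝ)*s/8 ≤ K - b := by linarith
  have e2 : ((K:ℝ)+m)/16 ≤ n - b := by linarith
  have hbn1 : b + 1 ≤ n := by
    have : (b:ℝ) < n := by linarith
    exact_mod_cast this
  refine ⟨hbn1, ?_⟩
  obtain ⟨c, rfl⟩ := Nat.exists_eq_add_of_le hbn1
  have hc1 : b + 1 + c - b = c + 1 := by omega
  have hc2 : b + 1 + c - (b+1) = c := by omega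
  rw [hc1, hc2]
  have q1 := hyp_choose_succ K b
  have q2 := hyp_choose_succ m c
  push_cast at *
  set X := (K.choose b : ℝ)
  set X' := (K.choose (b+1) : ℝ)
  set Y := (m.choose (c+1) : ℝ)
  set Y' := (m.choose c : ℝ)
  have hX' : 0 ≤ X' := by positivity
  have hY' : 0 ≤ Y' := by positivity
  have e2' : ((K:ℝ)+m)/16 ≤ c + 1 := by linarith
  have key : (X * Y) * (((K:ℝ) - b) * (c+1)) = (X'*Y') * (((b:ℝ)+1) * (m - c)) := by
    calc _ = (X * ((K:ℝ) - b)) * (Y * (c+1)) := by ring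
      _ = _ := by rw [← q1, q2]; ring
  have hnum : (s:ℝ)*s*(K+m)/128 ≤ ((K:ℝ) - b) * (c+1) := by
    have := mul_le_mul e1 e2' (by positivity) (by nlinarith)
    linarith
  have hnum0 : 0 < ((K:ℝ) - b) * (c+1) := lt_of_lt_of_le (by positivity) hnum
  have hden : ((b:ℝ)+1) * (m - c) ≤ (1 + 256/(s:ℝ)) * (((K:ℝ) - b) * (c+1)) := by
    have h3 : ((b:ℝ)+1) * (m - c) ≤ ((K:ℝ) - b) * (c+1) + 2*s*(K+m) := by
      nlinarith
    have h4 : 2*(s:ℝ)*(K+m) ≤ 256/(s:ℝ) * (((K:ℝ) - b) * (c+1)) := by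
      calc 2*(s:ℝ)*(K+m) = 256/(s:ℝ) * ((s:ℝ)*s*(K+m)/128) := by field_simp; norm_num
        _ ≤ _ := by gcongr
    linarith
  have : (X * Y) * (((K:ℝ) - b) * (c+1)) ≤
      ((1 + 256/(s:ℝ)) * (X'*Y')) * (((K:ℝ) - b) * (c+1)) := by
    rw [key]
    calc _ ≤ (X'*Y') * ((1 + 256/(s:ℝ)) * (((K:ℝ) - b) * (c+1))) := by gcongr
      _ = _ := by ring
  exact le_of_mul_le_mul_right this hnum0

/-- Bound left of the mean. -/
lemma hyp_left (K m n a s : ℕ) (hKm : K ≤ m) (h1 : K + m ≤ 4*n) (h2 : 4*n ≤ 3*(K+m))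
    (hs : 8 ≤ s) (hsK : s*s ≤ K) (ha : a*(K+m) ≤ K*n) :
    ((s:ℝ)+1) * ((K.choose a : ℝ) * (m.choose (n-a))) ≤
      Real.exp 256 * ((K+m).choose n : ℝ) := by
  have hs0 : (0:ℝ) < s := by exact_mod_cast (by omega : 0 < s)
  have it : ∀ j : ℕ, j ≤ s → a + j ≤ n ∧ (K.choose a : ℝ) * (m.choose (n-a)) ≤
      (1 + 256/(s:ℝ))^j * ((K.choose (a+j) : ℝ) * (m.choose (n-(a+j)))) := by
    intro j
    induction j with
    | zero =>
      intro _
      refine ⟨?_, by simp⟩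
      have : a * (K+m) ≤ n * (K+m) := by nlinarith
      have hp : 0 < K + m := by nlinarith
      simpa using Nat.le_of_mul_le_mul_right this hp
    | succ j ih =>
      intro hj
      obtain ⟨_, ih2⟩ := ih (by omega)
      obtain ⟨g1, g2⟩ := hyp_step K m n (a+j) s hKm h1 h2 hs hsK (by
        have : j * (K+m) ≤ s * (K+m) := Nat.mul_le_mul_right _ (by omega)
        nlinarith)
      refine ⟨by omega, ih2.trans ?_⟩
      rw [pow_succ, mul_assoc]
      exact mul_le_mul_of_nonneg_left g2 (by positivity)
  have it2 : ∀ j ∈ Finset.range (s+1), (K.choose a : ℝ) * (m.choose (n-a)) ≤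
      Real.exp 256 * ((K.choose (a+j) : ℝ) * (m.choose (n-(a+j)))) := by
    intro j hj
    have hj' : j ≤ s := by simpa [Nat.lt_succ_iff] using hj
    refine (it j hj').2.trans ?_
    gcongr
    calc (1 + 256/(s:ℝ))^j ≤ (1 + 256/(s:ℝ))^s := by
          apply pow_le_pow_right₀ _ hj'
          have : 0 ≤ 256/(s:ℝ) := by positivity
          linarith
      _ ≤ (Real.exp (256/(s:ℝ)))^s := by
          gcongr
          have := Real.add_one_le_exp (256/(s:ℝ))
          linarith
      _ = Real.exp 256 := by
          rw [← Real.exp_nat_mul]; congr 1; field_simp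
  have hsum : ∑ j ∈ Finset.range (s+1), (K.choose (a+j)) * (m.choose (n-(a+j)))
      ≤ (K+m).choose n := by
    rw [Nat.add_choose_eq]
    rw [← Finset.sum_image (s := Finset.range (s+1)) (g := fun j => (a+j, n-(a+j)))
      (f := fun ij : ℕ × ℕ => K.choose ij.1 * m.choose ij.2)]
    · apply Finset.sum_le_sum_of_subset
      intro x hx
      simp only [Finset.mem_image, Finset.mem_range] at hx
      obtain ⟨j, hj, rfl⟩ := hx
      have := (it j (by omega)).1
      exact Finset.HasAntidiagonal.mem_antidiagonal.2 (show a + j + (n - (a + j)) = n by omega)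
    · intro x _ y _ h
      have h' := congrArg Prod.fst h
      dsimp only at h'
      omega
  have hs1 := Finset.sum_le_sum it2
  rw [Finset.sum_const, Finset.card_range, nsmul_eq_mul, Nat.cast_add,
    Nat.cast_one, ← Finset.mul_sum] at hs1
  refine hs1.trans ?_
  gcongr
  exact_mod_cast hsum

/-- Bound at every point. -/
lemma hyp_all (K m n a s : ℕ) (hKm : K ≤ m) (h1 : K + m ≤ 4*n) (h2 : 4*n ≤ 3*(K+m))
    (hs : 8 ≤ s) (hsK : s*s ≤ K) (han : a ≤ n) :
    ((s:ℝ)+1) * ((K.choose a : ℝ) * (m.choose (n-a))) ≤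
      Real.exp 256 * ((K+m).choose n : ℝ) := by
  rcases le_total (a*(K+m)) (K*n) with h | h
  · exact hyp_left K m n a s hKm h1 h2 hs hsK h
  rcases lt_or_ge K a with hK | hK
  · rw [Nat.choose_eq_zero_of_lt hK]; simp; positivity
  rcases lt_or_ge m (n-a) with hm | hm
  · rw [Nat.choose_eq_zero_of_lt hm]; simp; positivity
  have := hyp_left K m (K+m-n) (K-a) s hKm (by omega) (by omega) hs hsK (by
    have hn : n ≤ K + m := by omega
    zify [hn, hK]
    zify at h
    nlinarith)
  have e : K + m - n - (K - a) = m - (n-a) := by omega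
  rwa [e, Nat.choose_symm hK, Nat.choose_symm hm, Nat.choose_symm (by omega)] at this

/-- Counting sets with prescribed intersection size. -/
lemma hyp_count (S n a : ℕ) (A : Finset (Fin S)) :
    ((Finset.univ : Finset (Finset (Fin S))).filter
      (fun T => T.card = n ∧ (T ∩ A).card = a)).card ≤
      A.card.choose a * (S - A.card).choose (n-a) := by
  have : S - A.card = (Aᶜ).card := by rw [Finset.card_compl, Fintype.card_fin]
  rw [this, ← Finset.card_powersetCard, ← Finset.card_powersetCard, ← Finset.card_product]
  apply Finset.card_le_card_of_injOn (fun T => (T ∩ A, T \ A))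
  · intro T hT
    simp only [Finset.coe_filter, Finset.mem_univ, true_and, Set.mem_ofPred_eq] at hT
    simp only [Finset.coe_product, Set.mem_prod, Finset.mem_coe, Finset.mem_powersetCard]
    have hh := Finset.card_sdiff_add_card_inter T A
    refine ⟨⟨Finset.inter_subset_right, hT.2⟩, ?_, by omega⟩
    intro x hx
    simp at hx ⊢
    exact hx.2
  · intro T _ U _ h
    simp only [Prod.mk.injEq] at h
    rw [← Finset.sdiff_union_inter T A, ← Finset.sdiff_union_inter U A, h.1, h.2]

/-- Hypergeometric anticoncentration, part 1. -/
theorem hypergeometric_anticoncentration_one :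
    ∃ C : ℝ, 0 < C ∧ ∀ (S M₁ M₂ : ℕ), 0 < S → 0 < M₁ → 0 < M₂ →
      Real.sqrt S ≤ (M₁ : ℝ) → (M₁ : ℝ) ≤ (S : ℝ)/2 →
      (S : ℝ)/4 ≤ (M₂ : ℝ) → (M₂ : ℝ) ≤ 3*(S : ℝ)/4 →
      ∀ A : Finset (Fin S), A.card = M₁ → ∀ a : ℤ,
        unifProb (fun T : {T : Finset (Fin S) // T.card = M₂} =>
            ((T.1 ∩ A).card : ℤ) = a) ≤ C * (S : ℝ) ^ (-(1 : ℝ)/4) := by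
  refine ⟨Real.exp 256, Real.exp_pos _, ?_⟩
  intro S M₁ M₂ hS hM₁ hM₂ h1 h2 h3 h4 A hA a
  have hS' : (0:ℝ) < S := by exact_mod_cast hS
  have k2 : 2 * M₁ ≤ S := by
    have : 2 * (M₁:ℝ) ≤ S := by linarith
    exact_mod_cast this
  have k3 : S ≤ 4 * M₂ := by
    have : (S:ℝ) ≤ 4 * M₂ := by linarith
    exact_mod_cast this
  have k4 : 4 * M₂ ≤ 3 * S := by
    have : 4 * (M₂:ℝ) ≤ 3 * S := by linarith
    exact_mod_cast this
  set s := Nat.sqrt M₁ with hs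
  -- reduce to a bound by `exp 256 / (s+1)`
  have hroot : 1 / ((s:ℝ)+1) ≤ (S:ℝ) ^ (-(1:ℝ)/4) := by
    have e : (S:ℝ) ^ (-(1:ℝ)/4) = 1 / (S:ℝ)^((1:ℝ)/4) := by
      rw [neg_div, Real.rpow_neg hS'.le, one_div ((S:ℝ)^((1:ℝ)/4))]
    rw [e]
    apply one_div_le_one_div_of_le (by positivity)
    have hlt : (M₁:ℝ) ≤ ((s:ℝ)+1)^2 := by
      have := Nat.lt_succ_sqrt M₁
      have h' : M₁ ≤ (s+1)^2 := by rw [pow_two]; exact this.le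
      exact_mod_cast h'
    have hS4 : (S:ℝ) ≤ ((s:ℝ)+1)^(4:ℕ) := by
      have := (Real.sqrt_le_left (by positivity)).1 (h1.trans hlt)
      calc (S:ℝ) ≤ _ := this
        _ = _ := by ring
    calc (S:ℝ)^((1:ℝ)/4) ≤ (((s:ℝ)+1)^(4:ℕ))^((1:ℝ)/4) := by gcongr
      _ = (s:ℝ)+1 := by
        rw [← Real.rpow_natCast, ← Real.rpow_mul (by positivity)]; norm_num
  suffices hmain : unifProb (fun T : {T : Finset (Fin S) // T.card = M₂} =>
            ((T.1 ∩ A).card : ℤ) = a) ≤ Real.exp 256 * (1 / ((s:ℝ)+1)) from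
    hmain.trans (mul_le_mul_of_nonneg_left hroot (Real.exp_pos _).le)
  have hs0 : (0:ℝ) < (s:ℝ)+1 := by positivity
  unfold unifProb
  rcases lt_or_ge s 8 with hs8 | hs8
  · have hp : (1:ℝ) ≤ Real.exp 256 * (1 / ((s:ℝ)+1)) := by
      rw [mul_one_div, le_div_iff₀ hs0]
      have : (s:ℝ) < 8 := by exact_mod_cast hs8
      have := Real.add_one_le_exp (256:ℝ)
      linarith
    refine le_trans ?_ hp
    apply div_le_one_of_le₀ _ (by positivity)
    exact_mod_cast Finset.card_le_univ _
  · have hcard : Fintype.card {T : Finset (Fin S) // T.card = M₂} = S.choose M₂ := by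
      simp
    rw [hcard]
    have hch : (0:ℝ) < S.choose M₂ := by
      exact_mod_cast Nat.choose_pos (by omega)
    rw [div_le_iff₀ hch, mul_one_div, div_mul_eq_mul_div, le_div_iff₀ hs0, mul_comm]
    by_cases hex : ∃ T : {T : Finset (Fin S) // T.card = M₂}, ((T.1 ∩ A).card : ℤ) = a
    · obtain ⟨T₀, hT₀⟩ := hex
      have han : (T₀.1 ∩ A).card ≤ M₂ :=
        (Finset.card_le_card Finset.inter_subset_left).trans T₀.2.le
      set a' := (T₀.1 ∩ A).card
      have hb := hyp_all M₁ (S - M₁) M₂ a' s (by omega) (by omega) (by omega) hs8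
        (Nat.sqrt_le M₁) han
      rw [show M₁ + (S - M₁) = S by omega] at hb
      refine le_trans (mul_le_mul_of_nonneg_left ?_ hs0.le) hb
      have hc := hyp_count S M₂ a' A
      rw [hA] at hc
      rw [← Nat.cast_mul]
      refine le_trans ?_ (Nat.cast_le.2 hc)
      apply Nat.cast_le.2
      apply Finset.card_le_card_of_injOn (fun T => T.1)
      · intro T hT
        simp only [Finset.coe_filter, Finset.mem_univ, true_and, Set.mem_ofPred_eq] at hT ⊢
        exact ⟨T.2, by exact_mod_cast hT.trans hT₀.symm⟩
      · intro T _ U _ h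
        exact Subtype.ext h
    · have hz : ∀ [DecidablePred (fun T : {T : Finset (Fin S) // T.card = M₂} =>
            ((T.1 ∩ A).card : ℤ) = a)], ((Finset.univ.filter
            (fun T : {T : Finset (Fin S) // T.card = M₂} =>
            ((T.1 ∩ A).card : ℤ) = a)).card : ℝ) = 0 := by
        intro _
        rw [Finset.filter_eq_empty_iff.2 (fun T _ h => hex ⟨T, h⟩)]
        simp
      rw [@hz (Classical.decPred _)]
      simp only [mul_zero]
      positivity

end
end

section
/- There is a constant c > 0 such that for all sufficiently large even N the following holds. Let X be a set of N variables partitioned into pairwise disjoint blocks B_1,…,B_t with ⋃_i B_i = X and √N − log N ≤ |B_i| ≤ √N + log N for every i, and let k be an integer with 1 ≤ k ≤ N^{1/5}. Then, for φ drawn from D, the probability that at least one block B_i is k-unbalanced with respect to φ is at least 1 − 2^{−c·√N·log N}. -/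
open MvPolynomial

noncomputable section

/-- `S ⊆ X` is `k`-unbalanced with respect to a partition given as a map on `X`. -/
def kUnbOn {h : ℕ} (X : Finset ℕ) (e : {x // x ∈ X} → Fin h ⊕ Fin h) (k : ℕ)
    (S : Finset ℕ) : Prop :=
  (k : ℤ) ≤ |((X.attach.filter fun x => x.1 ∈ S ∧ (e x).isLeft = true).card : ℤ) -
             ((X.attach.filter fun x => x.1 ∈ S ∧ (e x).isRight = true).card : ℤ)|


lemma aux_cb (m : ℕ) : Nat.centralBinom m ^ 2 * (2 * m + 1) ≤ 16 ^ m := by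
  induction m with
  | zero => simp
  | succ m ih =>
    have h := Nat.succ_mul_centralBinom_succ m
    have h2 : (m + 1) ^ 2 * (Nat.centralBinom (m + 1) ^ 2 * (2 * (m + 1) + 1))
        ≤ (m + 1) ^ 2 * 16 ^ (m + 1) := by
      calc (m + 1) ^ 2 * (Nat.centralBinom (m + 1) ^ 2 * (2 * (m + 1) + 1))
          = ((m + 1) * Nat.centralBinom (m + 1)) ^ 2 * (2 * m + 3) := by ring
        _ = (Nat.centralBinom m ^ 2 * (2 * m + 1)) * (4 * ((2 * m + 1) * (2 * m + 3))) := by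
            rw [h]; ring
        _ ≤ 16 ^ m * (4 * (4 * (m + 1) ^ 2)) := by
            apply Nat.mul_le_mul ih
            nlinarith
        _ = (m + 1) ^ 2 * 16 ^ (m + 1) := by ring
    exact Nat.le_of_mul_le_mul_left h2 (by positivity)

lemma aux_choose (n : ℕ) : (n.choose (n / 2)) ^ 2 * n ≤ 4 ^ n := by
  rcases Nat.even_or_odd' n with ⟨m, rfl | rfl⟩
  · have h := aux_cb m
    rw [Nat.centralBinom] at h
    have e : 2 * m / 2 = m := by omega
    rw [e, pow_mul]
    norm_num
    nlinarith [Nat.zero_le ((2 * m).choose m ^ 2)]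
  · have h := aux_cb (m + 1)
    have e : (2 * m + 1) / 2 = m := by omega
    have e2 : Nat.centralBinom (m + 1) = 2 * (2 * m + 1).choose m := by
      rw [Nat.centralBinom, show 2 * (m + 1) = (2 * m + 1) + 1 by ring, Nat.choose_succ_succ,
        Nat.choose_symm_half]
      ring
    rw [e2] at h
    rw [e, pow_add, pow_mul]
    norm_num
    have : (16 : ℕ) ^ (m + 1) = 16 * 16 ^ m := by ring
    rw [this] at h
    nlinarith [Nat.zero_le ((2 * m + 1).choose m ^ 2)]

/-- Nearly balanced subsets of a block. -/
def goodS (b : Finset ℕ) (k : ℕ) : Finset (Finset ℕ) :=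
  b.powerset.filter fun S => 2 * S.card < b.card + k ∧ b.card < 2 * S.card + k

lemma aux_good (b : Finset ℕ) (k : ℕ) :
    (goodS b k).card ≤ k * b.card.choose (b.card / 2) := by
  have hsub : goodS b k ⊆ (Finset.Ico ((b.card - k + 1) / 2) ((b.card - k + 1) / 2 + k)).biUnion
      (fun s => Finset.powersetCard s b) := by
    intro S hS
    simp only [goodS, Finset.mem_filter, Finset.mem_powerset] at hS
    simp only [Finset.mem_biUnion, Finset.mem_Ico, Finset.mem_powersetCard]
    exact ⟨S.card, by omega, hS.1, rfl⟩
  refine (Finset.card_le_card hsub).trans ?_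
  refine (Finset.card_biUnion_le_card_mul _ _ (b.card.choose (b.card / 2)) ?_).trans ?_
  · intro s _
    rw [Finset.card_powersetCard]
    exact Nat.choose_le_middle _ _
  · simp

lemma aux_good_sq (b : Finset ℕ) (k : ℕ) :
    (goodS b k).card ^ 2 * b.card ≤ k ^ 2 * 4 ^ b.card := by
  calc (goodS b k).card ^ 2 * b.card ≤ (k * b.card.choose (b.card / 2)) ^ 2 * b.card := by
        gcongr; exact aux_good b k
    _ = k ^ 2 * ((b.card.choose (b.card / 2)) ^ 2 * b.card) := by ring
    _ ≤ _ := by gcongr; exact aux_choose _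

/-- The colour pattern of a partition. -/
def patt {h t : ℕ} (X : Finset ℕ) (B : Fin t → Finset ℕ)
    (e : {x // x ∈ X} ≃ (Fin h ⊕ Fin h)) : Fin t → Finset ℕ := fun i =>
  (B i).filter fun x => ∃ hx : x ∈ X, (e ⟨x, hx⟩).isLeft = true

lemma aux_patt_mem {h t : ℕ} (X : Finset ℕ) (B : Fin t → Finset ℕ)
    (hB : Finset.univ.biUnion B = X) (k : ℕ)
    (e : {x // x ∈ X} ≃ (Fin h ⊕ Fin h)) (i : Fin t)
    (hk : ¬ kUnbOn X (fun x => e x) k (B i)) : patt X B e i ∈ goodS (B i) k := by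
  have hsub : B i ⊆ X := by
    rw [← hB]; exact Finset.subset_biUnion_of_mem B (Finset.mem_univ i)
  have h1 : (X.attach.filter fun x => x.1 ∈ B i ∧ (e x).isLeft = true).card
      = (patt X B e i).card := by
    rw [← Finset.card_image_of_injective _ Subtype.val_injective]
    congr 1
    ext x
    simp only [patt, Finset.mem_image, Finset.mem_filter, Finset.mem_attach, true_and]
    constructor
    · rintro ⟨⟨y, hy⟩, ⟨a, b⟩, rfl⟩
      exact ⟨a, hy, b⟩
    · rintro ⟨a, hx, b⟩
      exact ⟨⟨x, hx⟩, ⟨a, b⟩, rfl⟩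
  have h2 : (X.attach.filter fun x => x.1 ∈ B i ∧ (e x).isLeft = true).card
      + (X.attach.filter fun x => x.1 ∈ B i ∧ (e x).isRight = true).card = (B i).card := by
    have h3 : (X.attach.filter fun x => x.1 ∈ B i).card = (B i).card := by
      rw [← Finset.card_image_of_injective _ Subtype.val_injective]
      congr 1
      ext x
      simp only [Finset.mem_image, Finset.mem_filter, Finset.mem_attach, true_and]
      constructor
      · rintro ⟨⟨y, hy⟩, a, rfl⟩
        exact a
      · intro a
        exact ⟨⟨x, hsub a⟩, a, rfl⟩
    rw [← h3, ← Finset.card_filter_add_card_filter_not (s := X.attach.filter fun x => x.1 ∈ B i)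
      (fun x => (e x).isLeft = true), Finset.filter_filter, Finset.filter_filter]
    simp
  simp only [kUnbOn, not_le, abs_lt] at hk
  simp only [goodS, Finset.mem_filter, Finset.mem_powerset]
  refine ⟨Finset.filter_subset _ _, ?_⟩
  omega

lemma aux_fiber {h t : ℕ} (X : Finset ℕ) (B : Fin t → Finset ℕ)
    (hB : Finset.univ.biUnion B = X) (F : Finset ({x // x ∈ X} ≃ (Fin h ⊕ Fin h)))
    (p : Fin t → Finset ℕ) :
    (F.filter fun e => patt X B e = p).card ≤ h.factorial * h.factorial := by
  classical
  rcases (F.filter fun e => patt X B e = p).eq_empty_or_nonempty with h0 | ⟨e0, he0⟩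
  · rw [h0]; simp
  have key : ∀ e : {x // x ∈ X} ≃ (Fin h ⊕ Fin h), patt X B e = p → ∀ x, (e x).isLeft = (e0 x).isLeft := by
    intro e he x
    have he0' := (Finset.mem_filter.1 he0).2
    obtain ⟨x, hx⟩ := x
    have hx' := hx
    rw [← hB] at hx'
    obtain ⟨i, -, hi⟩ := Finset.mem_biUnion.1 hx'
    have hh : x ∈ patt X B e i ↔ x ∈ patt X B e0 i := by rw [he, he0']
    simp only [patt, Finset.mem_filter, hi, true_and, hx, exists_true_left] at hh
    exact Bool.eq_iff_iff.2 hh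
  have hsub : (F.filter fun e => patt X B e = p) ⊆
      (Finset.univ : Finset (Equiv.Perm (Fin h) × Equiv.Perm (Fin h))).image
        (fun q => e0.trans (Equiv.sumCongr q.1 q.2)) := by
    intro e he
    have hk := key e (Finset.mem_filter.1 he).2
    have : Set.MapsTo (e0.symm.trans e : Equiv.Perm (Fin h ⊕ Fin h))
        (Set.range Sum.inl) (Set.range Sum.inl) := by
      rintro _ ⟨a, rfl⟩
      have := hk (e0.symm (Sum.inl a))
      simp only [Equiv.apply_symm_apply, Sum.isLeft_inl] at this
      obtain ⟨y, hy⟩ := Sum.isLeft_iff.1 this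
      exact ⟨y, by simpa using hy.symm⟩
    obtain ⟨q, hq⟩ := Equiv.Perm.mem_sumCongrHom_range_of_perm_mapsTo_inl this
    refine Finset.mem_image.2 ⟨q, Finset.mem_univ _, ?_⟩
    ext x
    have := congrArg (fun f : Equiv.Perm (Fin h ⊕ Fin h) => f (e0 x)) hq
    simpa using this
  refine (Finset.card_le_card hsub).trans (Finset.card_image_le.trans ?_)
  simp [Fintype.card_perm]

lemma aux_count {h t : ℕ} (X : Finset ℕ) (B : Fin t → Finset ℕ)
    (hB : Finset.univ.biUnion B = X) (k : ℕ)
    (F : Finset ({x // x ∈ X} ≃ (Fin h ⊕ Fin h)))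
    (hF : ∀ e ∈ F, ∀ i, ¬ kUnbOn X (fun x => e x) k (B i)) :
    F.card ≤ (h.factorial * h.factorial) * ∏ i, (goodS (B i) k).card := by
  classical
  rw [← Fintype.card_piFinset]
  refine Finset.card_le_mul_card_image_of_maps_to (f := fun e => patt X B e) ?_ _ ?_
  · intro e he
    exact Fintype.mem_piFinset.2 fun i => aux_patt_mem X B hB k e i (hF e he i)
  · intro p _
    exact aux_fiber X B hB F p

lemma aux_block (x k g b : ℝ) (n : ℕ) (hx : 2 ^ 20 ≤ x) (hk0 : 0 ≤ k) (hg : 0 ≤ g)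
    (hk : k ≤ x ^ ((1 : ℝ) / 5))
    (hb : Real.sqrt x / 2 ≤ b) (h : g ^ 2 * b ≤ k ^ 2 * 4 ^ n) :
    g ≤ x ^ (-(1 : ℝ) / 40) * 2 ^ n := by
  have hx0 : 0 < x := by linarith [show (0 : ℝ) < 2 ^ 20 by norm_num]
  have h2 : (2 : ℝ) ≤ x ^ ((1 : ℝ) / 20) := by
    calc (2 : ℝ) = ((2 : ℝ) ^ (20 : ℝ)) ^ ((1 : ℝ) / 20) := by
          rw [← Real.rpow_mul (by norm_num)]; norm_num
      _ ≤ _ := by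
          apply Real.rpow_le_rpow (by positivity) _ (by norm_num)
          exact_mod_cast hx
  apply le_of_sq_le_sq _ (by positivity)
  have hk2 : k ^ 2 ≤ x ^ ((2 : ℝ) / 5) := by
    calc k ^ 2 ≤ (x ^ ((1 : ℝ) / 5)) ^ 2 := by gcongr
      _ = _ := by rw [← Real.rpow_natCast, ← Real.rpow_mul hx0.le]; norm_num
  have e1 : (x ^ (-(1 : ℝ) / 40) * 2 ^ n) ^ 2 = x ^ (-(1 : ℝ) / 20) * 4 ^ n := by
    rw [mul_pow, ← Real.rpow_natCast, ← Real.rpow_mul hx0.le, ← pow_mul, mul_comm n 2, pow_mul]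
    norm_num
  rw [e1]
  have hs : 0 < Real.sqrt x := Real.sqrt_pos.2 hx0
  have e2 : x ^ ((2 : ℝ) / 5) * x ^ ((1 : ℝ) / 20) = x ^ (-(1 : ℝ) / 20) * Real.sqrt x := by
    rw [Real.sqrt_eq_rpow, ← Real.rpow_add hx0, ← Real.rpow_add hx0]; norm_num
  have h3 : g ^ 2 * (Real.sqrt x / 2) ≤ x ^ ((2 : ℝ) / 5) * 4 ^ n := by
    calc g ^ 2 * (Real.sqrt x / 2) ≤ g ^ 2 * b := by gcongr
      _ ≤ k ^ 2 * 4 ^ n := h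
      _ ≤ _ := by gcongr
  have h4 : g ^ 2 * Real.sqrt x ≤ (x ^ (-(1 : ℝ) / 20) * 4 ^ n) * Real.sqrt x := by
    calc g ^ 2 * Real.sqrt x = (g ^ 2 * (Real.sqrt x / 2)) * 2 := by ring
      _ ≤ (x ^ ((2 : ℝ) / 5) * 4 ^ n) * x ^ ((1 : ℝ) / 20) := by gcongr
      _ = (x ^ ((2 : ℝ) / 5) * x ^ ((1 : ℝ) / 20)) * 4 ^ n := by ring
      _ = _ := by rw [e2]; ring
  exact le_of_mul_le_mul_right h4 hs

lemma aux_log : ∃ N₀ : ℕ, ∀ N : ℕ, N₀ ≤ N → Real.logb 2 N ≤ Real.sqrt N / 2 := by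
  have h := (isLittleO_log_rpow_atTop (show (0 : ℝ) < 1 / 2 by norm_num)).bound
    (show (0 : ℝ) < Real.log 2 / 2 by have := Real.log_pos (show (1 : ℝ) < 2 by norm_num); linarith)
  have h' := tendsto_natCast_atTop_atTop (R := ℝ) |>.eventually h
  obtain ⟨N₀, hN⟩ := Filter.eventually_atTop.1 h'
  refine ⟨N₀, fun N hN' => ?_⟩
  have := hN N hN'
  rw [Real.norm_eq_abs, Real.norm_eq_abs, ← Real.sqrt_eq_rpow, abs_of_nonneg (Real.sqrt_nonneg _)]
    at this
  have hl := Real.log_pos (show (1 : ℝ) < 2 by norm_num)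
  rw [Real.logb, div_le_iff₀ hl]
  linarith [le_abs_self (Real.log N)]

/-- With high probability under a random partition, one of the blocks is k-unbalanced. -/
theorem exists_unbalanced_block :
    ∃ c : ℝ, 0 < c ∧ ∃ N₀ : ℕ, ∀ (N h : ℕ), N₀ ≤ N → N = 2 * h →
      ∀ (X : Finset ℕ), X.card = N →
      ∀ (t : ℕ) (B : Fin t → Finset ℕ),
        (∀ i j, i ≠ j → Disjoint (B i) (B j)) →
        Finset.univ.biUnion B = X →
        (∀ i, Real.sqrt N - Real.logb 2 N ≤ ((B i).card : ℝ) ∧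
              ((B i).card : ℝ) ≤ Real.sqrt N + Real.logb 2 N) →
      ∀ (k : ℕ), 1 ≤ k → (k : ℝ) ≤ (N : ℝ) ^ ((1 : ℝ)/5) →
        1 - (2 : ℝ) ^ (-(c * Real.sqrt N * Real.logb 2 N)) ≤
          unifProb (fun e : {x // x ∈ X} ≃ (Fin h ⊕ Fin h) =>
            ∃ i, kUnbOn X (fun x => e x) k (B i)) := by
  obtain ⟨N₁, hN₁⟩ := aux_log
  refine ⟨1 / 160, by norm_num, max N₁ (2 ^ 20), ?_⟩
  intro N h hN hNh X hX t B hdisj hB hcard k hk1 hk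
  classical
  have hlog := hN₁ N (le_trans (le_max_left _ _) hN)
  have hNbig : 2 ^ 20 ≤ N := le_trans (le_max_right _ _) hN
  have hx : (2 : ℝ) ^ 20 ≤ (N : ℝ) := by exact_mod_cast hNbig
  have hx0 : (0 : ℝ) < N := by linarith [show (0 : ℝ) < 2 ^ 20 by norm_num]
  have hx1 : (1 : ℝ) ≤ N := by linarith [show (1 : ℝ) ≤ 2 ^ 20 by norm_num]
  have hs : (160 : ℝ) ≤ Real.sqrt N := by
    apply Real.le_sqrt_of_sq_le
    linarith [show (160 : ℝ) ^ 2 ≤ 2 ^ 20 by norm_num]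
  have hh : 0 < h := by omega
  -- counting
  set F := (Finset.univ : Finset ({x // x ∈ X} ≃ (Fin h ⊕ Fin h))).filter
    (fun e => ¬ ∃ i, kUnbOn X (fun x => e x) k (B i)) with hFdef
  have hF : F.card ≤ (h.factorial * h.factorial) * ∏ i, (goodS (B i) k).card := by
    apply aux_count X B hB k F
    intro e he i hi
    exact (Finset.mem_filter.1 he).2 ⟨i, hi⟩
  have hsumcard : ∑ i, (B i).card = N := by
    rw [← hX, ← hB, Finset.card_biUnion]
    intro i _ j _ hij
    exact hdisj i j hij
  have ht : Real.sqrt N / 2 ≤ t := by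
    have h1 : (N : ℝ) ≤ t * (Real.sqrt N + Real.sqrt N / 2) := by
      calc (N : ℝ) = ∑ i, ((B i).card : ℝ) := by exact_mod_cast hsumcard.symm
        _ ≤ ∑ _i : Fin t, (Real.sqrt N + Real.sqrt N / 2) :=
            Finset.sum_le_sum fun i _ => by linarith [(hcard i).2]
        _ = _ := by simp; ring
    have h2 := Real.mul_self_sqrt hx0.le
    have h3 : Real.sqrt N * Real.sqrt N ≤ (t * (3 / 2)) * Real.sqrt N := by linarith
    have h4 := le_of_mul_le_mul_right h3 (by linarith)
    linarith
  have hprod : ((∏ i, (goodS (B i) k).card : ℕ) : ℝ) ≤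
      (N : ℝ) ^ (-(1 : ℝ) / 80 * Real.sqrt N) * 4 ^ h := by
    push_cast
    calc ∏ i, ((goodS (B i) k).card : ℝ)
        ≤ ∏ i, ((N : ℝ) ^ (-(1 : ℝ) / 40) * 2 ^ (B i).card) := by
          apply Finset.prod_le_prod
          · intro i _; positivity
          · intro i _
            apply aux_block N k _ (B i).card _ hx (by positivity) (by positivity) hk
            · linarith [(hcard i).1]
            · exact_mod_cast aux_good_sq (B i) k
      _ = ((N : ℝ) ^ (-(1 : ℝ) / 40)) ^ t * 4 ^ h := by
          rw [Finset.prod_mul_distrib, Finset.prod_pow_eq_pow_sum, hsumcard, hNh, pow_mul]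
          norm_num
      _ ≤ _ := by
          gcongr
          rw [← Real.rpow_natCast, ← Real.rpow_mul hx0.le]
          apply Real.rpow_le_rpow_of_exponent_le hx1
          linarith
  have hcb : (4 : ℝ) ^ h ≤ N * (Nat.centralBinom h : ℝ) := by
    have := Nat.four_pow_le_two_mul_self_mul_centralBinom h hh
    rw [hNh]
    exact_mod_cast this
  have hΩ : Fintype.card ({x // x ∈ X} ≃ (Fin h ⊕ Fin h)) =
      Nat.centralBinom h * (h.factorial * h.factorial) := by
    have hc : Fintype.card {x // x ∈ X} = Fintype.card (Fin h ⊕ Fin h) := by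
      simp [hX, hNh, two_mul]
    rw [Fintype.card_equiv (Fintype.equivOfCardEq hc)]
    have := Nat.choose_mul_factorial_mul_factorial (show h ≤ 2 * h by omega)
    rw [show 2 * h - h = h by omega] at this
    rw [Nat.centralBinom, ← mul_assoc, this]
    simp [hX, hNh]
  have hcbpos : (0 : ℝ) < Nat.centralBinom h := by exact_mod_cast Nat.centralBinom_pos h
  have hfpos : (0 : ℝ) < (h.factorial : ℝ) * h.factorial := by
    have := Nat.factorial_pos h
    positivity
  set Om := Fintype.card ({x // x ∈ X} ≃ (Fin h ⊕ Fin h)) with hOm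
  have hΩpos : (0 : ℝ) < Om := by
    rw [hΩ]; push_cast; positivity
  have hbad : (F.card : ℝ) ≤ (2 : ℝ) ^ (-(1 / 160 * Real.sqrt N * Real.logb 2 N)) * Om := by
    have e1 : (2 : ℝ) ^ (-(1 / 160 * Real.sqrt N * Real.logb 2 N))
        = (N : ℝ) ^ (-(1 : ℝ) / 160 * Real.sqrt N) := by
      rw [show -(1 / 160 * Real.sqrt N * Real.logb 2 N)
        = Real.logb 2 N * (-(1 : ℝ) / 160 * Real.sqrt N) by ring,
        Real.rpow_mul (by norm_num), Real.rpow_logb (by norm_num) (by norm_num) hx0]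
    rw [e1, hΩ]
    calc (F.card : ℝ) ≤ ((h.factorial : ℝ) * h.factorial) *
          ((∏ i, (goodS (B i) k).card : ℕ) : ℝ) := by exact_mod_cast hF
      _ ≤ ((h.factorial : ℝ) * h.factorial) *
          ((N : ℝ) ^ (-(1 : ℝ) / 80 * Real.sqrt N) * (N * (Nat.centralBinom h : ℝ))) := by
          gcongr
          exact hprod.trans (by gcongr)
      _ = ((N : ℝ) ^ (-(1 : ℝ) / 80 * Real.sqrt N) * (N : ℝ) ^ (1 : ℝ)) *
          ((Nat.centralBinom h : ℝ) * ((h.factorial : ℝ) * h.factorial)) := by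
          rw [Real.rpow_one]; ring
      _ ≤ (N : ℝ) ^ (-(1 : ℝ) / 160 * Real.sqrt N) *
          ((Nat.centralBinom h : ℝ) * ((h.factorial : ℝ) * h.factorial)) := by
          gcongr
          rw [← Real.rpow_add hx0]
          apply Real.rpow_le_rpow_of_exponent_le hx1
          linarith
      _ = _ := by push_cast; ring
  unfold unifProb
  rw [← hOm, le_div_iff₀ hΩpos]
  have hsplit := Finset.card_filter_add_card_filter_not
    (s := (Finset.univ : Finset ({x // x ∈ X} ≃ (Fin h ⊕ Fin h))))
    (fun e => ∃ i, kUnbOn X (fun x => e x) k (B i))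
  rw [← hFdef, Finset.card_univ, ← hOm] at hsplit
  have hsplit' : ((Finset.univ.filter (fun e : {x // x ∈ X} ≃ (Fin h ⊕ Fin h) =>
      ∃ i, kUnbOn X (fun x => e x) k (B i))).card : ℝ) + F.card = Om := by
    exact_mod_cast hsplit
  have goal' : (1 - (2 : ℝ) ^ (-(1 / 160 * Real.sqrt N * Real.logb 2 N))) * Om ≤
      ((Finset.univ.filter (fun e : {x // x ∈ X} ≃ (Fin h ⊕ Fin h) =>
      ∃ i, kUnbOn X (fun x => e x) k (B i))).card : ℝ) := by
    linarith
  refine goal'.trans (le_of_eq ?_)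
  congr!

end
end
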